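/- arXiv:1606.02479 — 5 statements merged into one kernel-verified Lean document; each statement's English description precedes it below -/
import Mathlib

section
/- Let G be a cyclic grid graph with parameters d ≥ 1 and lengths ℓ₁,…,ℓ_d, each ℓᵢ ≥ 5, let f be a perfect graphical translation of G, let v be a vertex and set δ = f(v) − v. Then for every vertex w adjacent to v, one has f(w) = w + δ. -/
/-- The canonical basis vector `eᵢ` in the vertex group of a cyclic grid graph:
`eᵢ[j] = 1` if `j = i` and `0` otherwise. -/
def cycBasis (d : ℕ) (ℓ : Fin d → ℕ) (i : Fin d) : ∀ j, ZMod (ℓ j) :=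
  fun j => if j = i then 1 else 0

/-- Adjacency in the cyclic grid graph with parameters `d` and `ℓ`:
`v` and `w` are neighbors iff `v - w = ±eᵢ` for some `i`. -/
def CycAdj (d : ℕ) (ℓ : Fin d → ℕ) (v w : ∀ j, ZMod (ℓ j)) : Prop :=
  ∃ i, v - w = cycBasis d ℓ i ∨ w - v = cycBasis d ℓ i

/-- A perfect graphical translation of the cyclic grid graph: a bijection of the vertex
set that maps every vertex to a neighbor and preserves (non-)adjacency both ways. -/
structure IsPerfectTranslation (d : ℕ) (ℓ : Fin d → ℕ)
    (f : (∀ j, ZMod (ℓ j)) → (∀ j, ZMod (ℓ j))) : Prop where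
  bij : Function.Bijective f
  adj_map : ∀ v, CycAdj d ℓ v (f v)
  pres : ∀ v w, CycAdj d ℓ v w ↔ CycAdj d ℓ (f v) (f w)

/-!
Let `S` be the set of vectors `±eᵢ`. When no length divides `4`, sums of two elements of `S`
coincide only in the forms `x + y = y + x` and `x + (-x) = y + (-y)`. For `w` adjacent to `v`,
comparing the paths `v → w → f w` and `v → f v → f w` therefore leaves three possibilities:
`w = f v`, or `f w - w = f v - v`, or `f w = v`. For the neighbor `w = v - δ`, where `δ = f v - v`,
the first one is impossible and the others say that `f (v - δ) = v`: the vertex behind `v`, in the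
direction in which `f` moves `v`, is the preimage of `v`. By injectivity of `f`, this turns the
first and the third possibility into the second for every neighbor `w`.
-/

section AddCommGroup

variable {A : Type*} [AddCommGroup A]

/-- A symmetric Sidon set in an abelian group: a set closed under negation, without elements equal
to their negatives, in which sums of two elements coincide only up to order or when they vanish. The
vanishing sums `x + (-x)` have to be excepted in a symmetric set. In the Cayley graph of the set,
the condition says that every 4-cycle is a parallelogram. -/
structure IsSymmetricSidon (S : Set A) : Prop where
  neg_mem {x : A} : x ∈ S → -x ∈ S
  neg_ne_self {x : A} : x ∈ S → -x ≠ x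
  eq_or_eq_or_add_eq_zero {x y z w : A} : x ∈ S → y ∈ S → z ∈ S → w ∈ S → x + y = z + w →
    x = z ∨ x = w ∨ x + y = 0

namespace IsSymmetricSidon

variable {S : Set A} {f : A → A} {v w : A}

theorem eq_map_or_map_sub_self_eq_or_map_eq (hS : IsSymmetricSidon S) (hv : f v - v ∈ S)
    (hw : f w - w ∈ S) (hvw : w - v ∈ S) (hfvw : f w - f v ∈ S) :
    w = f v ∨ f w - w = f v - v ∨ f w = v := by
  have hpaths : (f w - w) + (w - v) = (f v - v) + (f w - f v) := by abel
  rcases hS.eq_or_eq_or_add_eq_zero hw hvw hv hfvw hpaths with h | h | h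
  · exact Or.inr (Or.inl h)
  · exact Or.inl (sub_right_injective h)
  · rw [sub_add_sub_cancel] at h
    exact Or.inr (Or.inr (sub_eq_zero.mp h))

theorem map_sub_map_sub_self (hS : IsSymmetricSidon S) (hmove : ∀ v, f v - v ∈ S)
    (hpres : ∀ v w, w - v ∈ S → f w - f v ∈ S) (v : A) : f (v - (f v - v)) = v := by
  have hback : v - (f v - v) - v = -(f v - v) := by abel
  have hmem : v - (f v - v) - v ∈ S := hback ▸ hS.neg_mem (hmove v)
  rcases hS.eq_map_or_map_sub_self_eq_or_map_eq (hmove v) (hmove _) hmem (hpres _ _ hmem)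
    with h | h | h
  · rw [h] at hback
    exact absurd hback.symm (hS.neg_ne_self (hmove v))
  · rw [sub_eq_iff_eq_add.mp h, add_sub_cancel]
  · exact h

theorem map_sub_self_eq_of_sub_mem (hS : IsSymmetricSidon S) (hinj : Function.Injective f)
    (hmove : ∀ v, f v - v ∈ S) (hpres : ∀ v w, w - v ∈ S → f w - f v ∈ S) (hvw : w - v ∈ S) :
    f w - w = f v - v := by
  have hbehind := hS.map_sub_map_sub_self hmove hpres
  rcases hS.eq_map_or_map_sub_self_eq_or_map_eq (hmove v) (hmove w) hvw (hpres v w hvw)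
    with h | h | h
  · have hv : w - (f w - w) = v := hinj ((hbehind w).trans h)
    rw [← h, ← hv, sub_sub_cancel]
  · exact h
  · have hw : w = v - (f v - v) := hinj (h.trans (hbehind v).symm)
    rw [h, hw, sub_sub_cancel]

end IsSymmetricSidon

end AddCommGroup

section SignedSingles

variable {ι : Type*} [DecidableEq ι] {A : ι → Type*} [∀ i, AddCommGroup (A i)] {a : ∀ i, A i}

/-- The vectors `±aᵢ eᵢ` of a product of abelian groups: the connection set of the Cartesian
product of the Cayley graphs of the factors with respect to `{aᵢ, -aᵢ}`. -/
def signedSingles (a : ∀ i, A i) : Set (∀ i, A i) :=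
  {x | ∃ i, x = Pi.single i (a i) ∨ x = -Pi.single i (a i)}

namespace signedSingles

variable {x y z w : ∀ i, A i}

theorem neg_mem (hx : x ∈ signedSingles a) : -x ∈ signedSingles a := by
  obtain ⟨i, rfl | rfl⟩ := hx
  · exact ⟨i, Or.inr rfl⟩
  · exact ⟨i, Or.inl (neg_neg _)⟩

theorem eq_or_eq_neg_of_apply_ne_zero (hx : x ∈ signedSingles a) (hy : y ∈ signedSingles a)
    {i : ι} (hxi : x i ≠ 0) (hyi : y i ≠ 0) : x = y ∨ x = -y := by
  have index_eq {z : ∀ i, A i} {j : ι} (hz : z = Pi.single j (a j) ∨ z = -Pi.single j (a j))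
      (hzi : z i ≠ 0) : i = j := by
    by_contra hij
    rcases hz with rfl | rfl <;> simp [hij] at hzi
  obtain ⟨j, hj⟩ := hx
  obtain ⟨k, hk⟩ := hy
  obtain rfl := index_eq hj hxi
  obtain rfl := index_eq hk hyi
  rcases hj with rfl | rfl <;> rcases hk with rfl | rfl <;> simp

theorem exists_four_nsmul_apply_ne_zero (ha : ∀ i, 4 • a i ≠ 0) (hx : x ∈ signedSingles a) :
    ∃ i, 4 • x i ≠ 0 := by
  obtain ⟨i, rfl | rfl⟩ := hx <;> exact ⟨i, by simpa using ha i⟩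

theorem four_nsmul_ne_zero (ha : ∀ i, 4 • a i ≠ 0) (hx : x ∈ signedSingles a) : 4 • x ≠ 0 := by
  obtain ⟨i, hi⟩ := exists_four_nsmul_apply_ne_zero ha hx
  exact fun h => hi (congrFun h i)

theorem exists_two_nsmul_apply_ne_zero (ha : ∀ i, 4 • a i ≠ 0) (hx : x ∈ signedSingles a) :
    ∃ i, 2 • x i ≠ 0 := by
  obtain ⟨i, hi⟩ := exists_four_nsmul_apply_ne_zero ha hx
  refine ⟨i, fun h => hi ?_⟩
  rw [show 4 = 2 * 2 from rfl, mul_nsmul, h, nsmul_zero]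

theorem three_nsmul_notMem (ha : ∀ i, 4 • a i ≠ 0) (hx : x ∈ signedSingles a) :
    3 • x ∉ signedSingles a := by
  intro h3
  obtain ⟨i, hi⟩ := exists_four_nsmul_apply_ne_zero ha h3
  have h3i : (3 • x) i ≠ 0 := right_ne_zero_of_smul hi
  have hxi : x i ≠ 0 := fun h => h3i (by rw [Pi.smul_apply, h, nsmul_zero])
  rcases eq_or_eq_neg_of_apply_ne_zero h3 hx h3i hxi with h | h
  · have h2 : 2 • x = 0 := by rwa [succ_nsmul, add_eq_right] at h
    obtain ⟨j, hj⟩ := exists_two_nsmul_apply_ne_zero ha hx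
    exact hj (congrFun h2 j)
  · exact four_nsmul_ne_zero ha hx (by rw [succ_nsmul, h, neg_add_cancel])

theorem eq_of_add_eq_two_nsmul_of_apply_ne_zero (ha : ∀ i, 4 • a i ≠ 0)
    (hx : x ∈ signedSingles a) (hy : y ∈ signedSingles a) (hz : z ∈ signedSingles a)
    (h : x + y = 2 • z) {i : ι} (hxi : x i ≠ 0) (hzi : z i ≠ 0) : x = z := by
  refine (eq_or_eq_neg_of_apply_ne_zero hx hz hxi hzi).resolve_right ?_
  rintro rfl
  refine three_nsmul_notMem ha hz ?_
  rwa [succ_nsmul, ← h, neg_add_cancel_comm]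

theorem eq_of_add_eq_two_nsmul (ha : ∀ i, 4 • a i ≠ 0) (hx : x ∈ signedSingles a)
    (hy : y ∈ signedSingles a) (hz : z ∈ signedSingles a) (h : x + y = 2 • z) : x = z := by
  obtain ⟨i, hi⟩ := exists_two_nsmul_apply_ne_zero ha hz
  have hzi : z i ≠ 0 := right_ne_zero_of_smul hi
  by_cases hxi : x i = 0
  · have hyi : y i ≠ 0 := by
      rwa [← Pi.smul_apply, ← h, Pi.add_apply, hxi, zero_add] at hi
    have hyz : y = z :=
      eq_of_add_eq_two_nsmul_of_apply_ne_zero ha hy hx hz (by rw [add_comm, h]) hyi hzi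
    rwa [hyz, two_nsmul, add_left_inj] at h
  · exact eq_of_add_eq_two_nsmul_of_apply_ne_zero ha hx hy hz h hxi hzi

theorem eq_or_eq_of_apply_ne_zero (ha : ∀ i, 4 • a i ≠ 0) (hx : x ∈ signedSingles a)
    (hy : y ∈ signedSingles a) (hz : z ∈ signedSingles a) (hw : w ∈ signedSingles a)
    (h : x + y = z + w) {i : ι} (hxi : x i ≠ 0) (hzi : z i ≠ 0) : x = z ∨ x = w := by
  refine (eq_or_eq_neg_of_apply_ne_zero hx hz hxi hzi).imp_right fun hxz => ?_
  have hmid : w + -y = 2 • x := by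
    rw [← sub_eq_add_neg, two_nsmul, sub_eq_iff_eq_add, add_assoc, h, hxz, neg_add_cancel_left]
  exact (eq_of_add_eq_two_nsmul ha hw (neg_mem hy) hx hmid).symm

end signedSingles

theorem isSymmetricSidon_signedSingles (ha : ∀ i, 4 • a i ≠ 0) :
    IsSymmetricSidon (signedSingles a) where
  neg_mem := signedSingles.neg_mem
  neg_ne_self hx hneg := by
    obtain ⟨i, hi⟩ := signedSingles.exists_two_nsmul_apply_ne_zero ha hx
    exact hi (by rw [two_nsmul, ← neg_eq_iff_add_eq_zero, ← Pi.neg_apply, hneg])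
  eq_or_eq_or_add_eq_zero {x y z w} hx hy hz hw h := by
    obtain ⟨i, hi⟩ := signedSingles.exists_two_nsmul_apply_ne_zero ha hx
    have hxi : x i ≠ 0 := right_ne_zero_of_smul hi
    by_cases hzi : z i = 0
    · by_cases hwi : w i = 0
      · have hsum : x i + y i = 0 := by
          rw [← Pi.add_apply, h, Pi.add_apply, hzi, hwi, add_zero]
        have hyi : y i ≠ 0 := fun hyi => hxi (by rwa [hyi, add_zero] at hsum)
        rcases signedSingles.eq_or_eq_neg_of_apply_ne_zero hx hy hxi hyi with rfl | rfl
        · exact absurd (by rwa [two_nsmul]) hi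
        · exact Or.inr (Or.inr (neg_add_cancel y))
      · rw [add_comm z w] at h
        exact or_assoc.mp <| Or.inl <| Or.symm <|
          signedSingles.eq_or_eq_of_apply_ne_zero ha hx hy hw hz h hxi hwi
    · exact or_assoc.mp <| Or.inl <|
        signedSingles.eq_or_eq_of_apply_ne_zero ha hx hy hz hw h hxi hzi

end SignedSingles

section CyclicGrid

variable {d : ℕ} {ℓ : Fin d → ℕ}

theorem cycBasis_eq_single (i : Fin d) : cycBasis d ℓ i = Pi.single i 1 := by
  funext j
  obtain rfl | hj := eq_or_ne j i
  · simp [cycBasis]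
  · simp [cycBasis, hj]

theorem cycAdj_iff_sub_mem_signedSingles {v w : ∀ j, ZMod (ℓ j)} :
    CycAdj d ℓ v w ↔ w - v ∈ signedSingles (1 : ∀ j, ZMod (ℓ j)) := by
  refine exists_congr fun i => ?_
  rw [cycBasis_eq_single, Pi.one_apply, or_comm, ← neg_sub w v, neg_eq_iff_eq_neg]

theorem isSymmetricSidon_signedSingles_one (hℓ : ∀ i, ¬ ℓ i ∣ 4) :
    IsSymmetricSidon (signedSingles (1 : ∀ j, ZMod (ℓ j))) := by
  refine isSymmetricSidon_signedSingles fun i h => hℓ i ?_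
  rwa [Pi.one_apply, nsmul_one, ZMod.natCast_eq_zero_iff] at h

end CyclicGrid

/-- A length `0` is allowed: it stands for an infinite direction, as `ZMod 0 = ℤ`. -/
theorem contamination_lemma_general (d : ℕ) (ℓ : Fin d → ℕ) (hℓ : ∀ i, ¬ ℓ i ∣ 4)
    (f : (∀ j, ZMod (ℓ j)) → (∀ j, ZMod (ℓ j))) (hinj : Function.Injective f)
    (hmove : ∀ v, CycAdj d ℓ v (f v))
    (hpres : ∀ v w, CycAdj d ℓ v w → CycAdj d ℓ (f v) (f w))
    (v w : ∀ j, ZMod (ℓ j)) (hw : CycAdj d ℓ v w) :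
    f w = w + (f v - v) := by
  simp only [cycAdj_iff_sub_mem_signedSingles] at hmove hpres hw
  exact sub_eq_iff_eq_add'.mp
    ((isSymmetricSidon_signedSingles_one hℓ).map_sub_self_eq_of_sub_mem hinj hmove hpres hw)

theorem contamination_lemma (d : ℕ) (hd : 1 ≤ d) (ℓ : Fin d → ℕ) (hℓ : ∀ i, 5 ≤ ℓ i)
    (f : (∀ j, ZMod (ℓ j)) → (∀ j, ZMod (ℓ j)))
    (hf : IsPerfectTranslation d ℓ f)
    (v w : ∀ j, ZMod (ℓ j)) (hw : CycAdj d ℓ v w) :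
    f w = w + (f v - v) := by
  have hdvd : ∀ i, ¬ ℓ i ∣ 4 := fun i h => Nat.not_le.mpr (hℓ i) (Nat.le_of_dvd four_pos h)
  exact contamination_lemma_general d ℓ hdvd f hf.bij.injective hf.adj_map
    (fun v w => (hf.pres v w).mp) v w hw
end

section
/- Let G be a cyclic grid graph with parameters d ≥ 1 and lengths ℓ₁,…,ℓ_d, each ℓᵢ ≥ 5, and let f be a perfect graphical translation of G. Then f is a geometrical translation: there exists δ = ±eᵢ for some i ∈ {1,…,d} such that f(v) = v + δ for every vertex v. -/
/-!
Write `f v = v + g v`. If `s` is a step, then the closed walk through `v`, `v + s`, `f (v + s)`,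
`f v` gives `s + g (v + s) = g v + t` with `t` again a step. When all lengths are at least `5`,
such an equality between sums of two steps is trivial, so that `g v = s`, `g (v + s) = g v` or
`g (v + s) = -s`. Taking `s = g v` at the vertex `v - g v` shows that `g` does not change when one
moves backwards along its own value and hence, steps having finite order, not when one moves
forwards either. In all three cases it follows that `g (v + s) = g v`; as the steps generate the
vertex group, `g` is constant.
-/

theorem periodic_of_mem_closure {G β : Type*} [AddGroup G] {S : Set G} {φ : G → β}
    (hφ : ∀ s ∈ S, Function.Periodic φ s) {x : G} (hx : x ∈ AddSubgroup.closure S) :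
    Function.Periodic φ x := by
  induction hx using AddSubgroup.closure_induction with
  | mem s hs => exact hφ s hs
  | zero => intro v; rw [add_zero]
  | add x y _ _ hx hy => exact hx.add_period hy
  | neg x _ hx => exact hx.neg

section DisplacementField

variable {A : Type*} [AddCommGroup A] {S : Set A} {g : A → A}

/-- A set of steps in an abelian group is rigid if it contains no `s` with `2 s = 0` and the only
coincidences between sums of two steps are the trivial ones `s + b = b + s` and
`s + (-s) = a + (-a)`. The latter means that every `4`-cycle of the Cayley graph of the set is a
parallelogram. -/
structure IsRigid (S : Set A) : Prop where
  ne_neg : ∀ s ∈ S, s ≠ -s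
  eq_or_eq_or_eq_neg : ∀ s ∈ S, ∀ b ∈ S, ∀ a ∈ S, ∀ t ∈ S,
    s + b = a + t → a = s ∨ t = s ∨ b = -s

/-- `g` is the displacement of an endomorphism `f` of the Cayley graph of `S` which moves every
vertex along an edge, that is, `f v = v + g v`; the second condition reads
`f (v + s) - f v ∈ S`. -/
structure IsDisplacementField (S : Set A) (g : A → A) : Prop where
  mem : ∀ v, g v ∈ S
  add_sub_mem : ∀ v, ∀ s ∈ S, s + g (v + s) - g v ∈ S

namespace IsDisplacementField

theorem eq_or_map_add_eq_or_map_add_eq_neg (hg : IsDisplacementField S g) (hS : IsRigid S)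
    (v : A) {s : A} (hs : s ∈ S) : g v = s ∨ g (v + s) = g v ∨ g (v + s) = -s := by
  have hsq : s + g (v + s) = g v + (s + g (v + s) - g v) := by abel
  have h := hS.eq_or_eq_or_eq_neg s hs _ (hg.mem (v + s)) _ (hg.mem v) _ (hg.add_sub_mem v s hs) hsq
  rwa [add_sub_assoc, add_eq_left, sub_eq_zero] at h

theorem map_sub_self (hg : IsDisplacementField S g) (hS : IsRigid S) (v : A) :
    g (v - g v) = g v := by
  have h := hg.eq_or_map_add_eq_or_map_add_eq_neg hS (v - g v) (hg.mem v)
  rw [sub_add_cancel] at h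
  rcases h with h | h | h
  · exact h
  · exact h.symm
  · exact absurd h (hS.ne_neg _ (hg.mem v))

theorem map_sub_nsmul_self (hg : IsDisplacementField S g) (hS : IsRigid S) (v : A) (n : ℕ) :
    g (v - n • g v) = g v := by
  induction n with
  | zero => simp
  | succ n ih =>
    have h := hg.map_sub_self hS (v - n • g v)
    rwa [ih, sub_sub, ← succ_nsmul] at h

theorem map_add_self (hg : IsDisplacementField S g) (hS : IsRigid S) {v : A}
    (hv : IsOfFinAddOrder (g v)) : g (v + g v) = g v := by
  obtain ⟨n, hn : n • g v = -g v⟩ :=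
    hv.mem_multiples_iff_mem_zmultiples.2 (neg_mem (AddSubgroup.mem_zmultiples (g v)))
  rw [← sub_neg_eq_add, ← hn, hg.map_sub_nsmul_self hS]

theorem periodic (hg : IsDisplacementField S g) (hS : IsRigid S)
    (hfin : ∀ s ∈ S, IsOfFinAddOrder s) {s : A} (hs : s ∈ S) : Function.Periodic g s := by
  intro v
  have hfwd (w : A) : g (w + g w) = g w := hg.map_add_self hS (hfin _ (hg.mem w))
  rcases hg.eq_or_map_add_eq_or_map_add_eq_neg hS v hs with h | h | h
  · rw [← h, hfwd]
  · exact h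
  · rw [← hfwd (v + s), h, add_neg_cancel_right]

theorem eq_map_zero (hg : IsDisplacementField S g) (hS : IsRigid S)
    (hfin : ∀ s ∈ S, IsOfFinAddOrder s) (hgen : AddSubgroup.closure S = ⊤) (v : A) :
    g v = g 0 :=
  (periodic_of_mem_closure (fun _ hs ↦ hg.periodic hS hfin hs) (hgen ▸ AddSubgroup.mem_top v)).eq

end IsDisplacementField

end DisplacementField

section CyclicGrid

variable {d : ℕ} {ℓ : Fin d → ℕ}

/-- The steps `±eᵢ`. The cyclic grid graph is the Cayley graph of this set. -/
def gridSteps (ℓ : Fin d → ℕ) : Set (∀ j, ZMod (ℓ j)) :=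
  {x | ∃ i, x = cycBasis d ℓ i ∨ x = -cycBasis d ℓ i}

theorem cycAdj_iff_sub_mem_gridSteps {v w : ∀ j, ZMod (ℓ j)} :
    CycAdj d ℓ v w ↔ w - v ∈ gridSteps ℓ := by
  refine exists_congr fun i ↦ ?_
  rw [or_comm, ← neg_sub w v, neg_eq_iff_eq_neg]

theorem cycAdj_add_right_iff {v s : ∀ j, ZMod (ℓ j)} :
    CycAdj d ℓ v (v + s) ↔ s ∈ gridSteps ℓ := by
  rw [cycAdj_iff_sub_mem_gridSteps, add_sub_cancel_left]

theorem neg_mem_gridSteps {s : ∀ j, ZMod (ℓ j)} (hs : s ∈ gridSteps ℓ) : -s ∈ gridSteps ℓ := by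
  obtain ⟨i, rfl | rfl⟩ := hs
  · exact ⟨i, Or.inr rfl⟩
  · exact ⟨i, Or.inl (neg_neg _)⟩

theorem closure_gridSteps : AddSubgroup.closure (gridSteps ℓ) = ⊤ := by
  refine eq_top_iff.2 fun v _ ↦ ?_
  have hv : v = ∑ i, ((v i).cast : ℤ) • cycBasis d ℓ i := by
    simp [cycBasis_eq_single, ← Pi.single_smul, Finset.univ_sum_single]
  rw [hv]
  have hmem (i : Fin d) : cycBasis d ℓ i ∈ gridSteps ℓ := ⟨i, Or.inl rfl⟩
  exact sum_mem fun i _ ↦ zsmul_mem (AddSubgroup.subset_closure (hmem i)) _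

theorem nsmul_ne_zero_of_isUnit {n k : ℕ} {u : ZMod n} (hu : IsUnit u) (hk : 0 < k)
    (hkn : k < n) : k • u ≠ 0 := by
  rw [nsmul_eq_mul, Ne, hu.mul_left_eq_zero, ZMod.natCast_eq_zero_iff]
  exact Nat.not_dvd_of_pos_of_lt hk hkn

theorem exists_isUnit_coord_of_mem_gridSteps {s : ∀ j, ZMod (ℓ j)} (hs : s ∈ gridSteps ℓ) :
    ∃ i, IsUnit (s i) ∧ ∀ x ∈ gridSteps ℓ, x ≠ s → ∃ k : ℕ, k ≤ 1 ∧ x i = -(k • s i) := by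
  obtain ⟨i, hs⟩ := hs
  refine ⟨i, ?_, ?_⟩
  · rcases hs with rfl | rfl <;> simp [cycBasis]
  · rintro x ⟨j, hx⟩ hxs
    by_cases hij : i = j
    · subst hij
      have hx_neg : x = -s := by
        rcases hs with rfl | rfl <;> rcases hx with rfl | rfl <;> simp_all
      exact ⟨1, le_rfl, by simp [hx_neg]⟩
    · exact ⟨0, zero_le_one, by rcases hx with rfl | rfl <;> simp [cycBasis, hij]⟩

theorem ne_neg_of_mem_gridSteps (hℓ : ∀ i, 3 ≤ ℓ i) {s : ∀ j, ZMod (ℓ j)}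
    (hs : s ∈ gridSteps ℓ) : s ≠ -s := by
  intro h
  obtain ⟨i, hu, -⟩ := exists_isUnit_coord_of_mem_gridSteps hs
  refine nsmul_ne_zero_of_isUnit hu two_pos (hℓ i) ?_
  rw [two_nsmul, ← eq_neg_iff_add_eq_zero]
  exact congrFun h i

theorem isRigid_gridSteps (hℓ : ∀ i, 5 ≤ ℓ i) : IsRigid (gridSteps ℓ) where
  ne_neg _ := ne_neg_of_mem_gridSteps fun i ↦ (by decide : 3 ≤ 5).trans (hℓ i)
  eq_or_eq_or_eq_neg s hs b hb a ha t ht h := by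
    by_contra! ⟨has, hts, hbs⟩
    obtain ⟨i, hu, hcoord⟩ := exists_isUnit_coord_of_mem_gridSteps hs
    obtain ⟨k, hk, hak⟩ := hcoord a ha has
    obtain ⟨l, hl, htl⟩ := hcoord t ht hts
    obtain ⟨m, hm, hbm⟩ := hcoord (-b) (neg_mem_gridSteps hb) fun h ↦ hbs (neg_eq_iff_eq_neg.1 h)
    -- Along `i`, `s + b` is `1` or `2` times `s i` and `a + t` is `0`, `-1` or `-2` times `s i`:
    -- they differ by at most `4` times `s i`, whence the bound `5 ≤ ℓ i`.
    have hsum : (1 + m + k + l) • s i = 0 := by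
      have hi : s i + b i = a i + t i := congrFun h i
      rw [Pi.neg_apply, neg_inj] at hbm
      rw [hak, htl, hbm] at hi
      rw [add_nsmul, add_nsmul, add_nsmul, one_nsmul, hi]
      abel
    exact nsmul_ne_zero_of_isUnit hu (by lia) (by linarith [hℓ i]) hsum

theorem isDisplacementField_sub_self {f : (∀ j, ZMod (ℓ j)) → (∀ j, ZMod (ℓ j))}
    (hadj : ∀ v, CycAdj d ℓ v (f v)) (hmap : ∀ v w, CycAdj d ℓ v w → CycAdj d ℓ (f v) (f w)) :
    IsDisplacementField (gridSteps ℓ) fun v ↦ f v - v where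
  mem v := cycAdj_iff_sub_mem_gridSteps.1 (hadj v)
  add_sub_mem v s hs := by
    have h := cycAdj_iff_sub_mem_gridSteps.1 (hmap v (v + s) (cycAdj_add_right_iff.2 hs))
    convert h using 1
    abel

end CyclicGrid

theorem perfect_is_geometrical_general {d : ℕ} {ℓ : Fin d → ℕ} (hℓ : ∀ i, 5 ≤ ℓ i)
    {f : (∀ j, ZMod (ℓ j)) → (∀ j, ZMod (ℓ j))} (hadj : ∀ v, CycAdj d ℓ v (f v))
    (hmap : ∀ v w, CycAdj d ℓ v w → CycAdj d ℓ (f v) (f w)) :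
    ∃ (i : Fin d) (δ : ∀ j, ZMod (ℓ j)),
      (δ = cycBasis d ℓ i ∨ δ = -cycBasis d ℓ i) ∧ ∀ v, f v = v + δ := by
  have (i : Fin d) : NeZero (ℓ i) := ⟨by linarith [hℓ i]⟩
  have hg := isDisplacementField_sub_self hadj hmap
  obtain ⟨i, hi⟩ := hg.mem 0
  refine ⟨i, f 0 - 0, hi, fun v ↦ ?_⟩
  rw [← sub_eq_iff_eq_add']
  exact hg.eq_map_zero (isRigid_gridSteps hℓ) (fun s _ ↦ isOfFinAddOrder_of_finite s)
    closure_gridSteps v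

theorem perfect_is_geometrical (d : ℕ) (hd : 1 ≤ d) (ℓ : Fin d → ℕ)
    (hℓ : ∀ i, 5 ≤ ℓ i)
    (f : (∀ j, ZMod (ℓ j)) → (∀ j, ZMod (ℓ j)))
    (hf : IsPerfectTranslation d ℓ f) :
    ∃ (i : Fin d) (δ : ∀ j, ZMod (ℓ j)),
      (δ = cycBasis d ℓ i ∨ δ = -cycBasis d ℓ i) ∧ ∀ v, f v = v + δ := by
  exact perfect_is_geometrical_general hℓ hf.adj_map fun v w ↦ (hf.pres v w).1
end

section
/- Let G be a cyclic grid graph with parameters d ≥ 1 and lengths ℓ₁,…,ℓ_d, each ℓᵢ ≥ 5. Then the number of perfect graphical translations of G is exactly 2d (one for each choice of δ = ±eᵢ, i ∈ {1,…,d}). -/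
/-!
Write `δ v = f v - v` for the displacement of a perfect translation `f`. The edge from `v` to
`v + s` is sent to an edge, say in direction `c`, so `s + δ (v + s) = δ v + c`. When no length
divides `4`, such a relation between signed unit vectors is trivial: the two pairs of summands
coincide, or both cancel. Applied to the edge from `v - δ v` to `v`, this gives
`δ (v - δ v) = δ v`, that is, `f (v - δ v) = v`; injectivity of `f` then gives
`δ (v + δ v) = δ v`. The latter settles the cases of the relation that do not give
`δ (v + s) = δ v` immediately, so `δ` is constant.
-/

section Cayley

variable {G : Type*} [AddCommGroup G] {S : Set G} {f : G → G}

/-- A set in an abelian group, without elements of order at most two, in which `a + b = c + e`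
holds only for trivial reasons: the two pairs of summands agree, or both sums vanish. This adapts
the Sidon property to sets closed under negation, which need not be Sidon in the strict sense. -/
structure IsSymmSidon (S : Set G) : Prop where
  add_self_ne_zero : ∀ a ∈ S, a + a ≠ 0
  eq_or_eq_or_add_eq_zero : ∀ a ∈ S, ∀ b ∈ S, ∀ c ∈ S, ∀ e ∈ S,
    a + b = c + e → a = c ∨ a = e ∨ a + b = 0

/-- An injective endomorphism of the Cayley digraph of `G` with connection set `S` (arcs `v → w`
whenever `w - v ∈ S`) that moves every vertex along an arc. -/
structure IsCayleyTranslation (S : Set G) (f : G → G) : Prop where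
  injective : Function.Injective f
  sub_mem : ∀ v, f v - v ∈ S
  map_sub_map_mem : ∀ v w, w - v ∈ S → f w - f v ∈ S

/-- The vector by which a self-map `f` of `G` moves the point `v`. -/
def displacement (f : G → G) (v : G) : G := f v - v

theorem add_displacement (f : G → G) (v : G) : v + displacement f v = f v :=
  add_sub_cancel v (f v)

namespace IsCayleyTranslation

theorem displacement_mem (hf : IsCayleyTranslation S f) (v : G) : displacement f v ∈ S :=
  hf.sub_mem v

theorem exists_add_displacement_eq (hf : IsCayleyTranslation S f) (v : G) {s : G} (hs : s ∈ S) :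
    ∃ c ∈ S, s + displacement f (v + s) = displacement f v + c :=
  ⟨f (v + s) - f v, hf.map_sub_map_mem v (v + s) (by rwa [add_sub_cancel_left]), by
    simp only [displacement]; abel⟩

theorem displacement_sub_displacement (hf : IsCayleyTranslation S f) (hS : IsSymmSidon S) (v : G) :
    displacement f (v - displacement f v) = displacement f v := by
  set a := displacement f v with ha
  have haS : a ∈ S := hf.displacement_mem v
  have hbS : displacement f (v - a) ∈ S := hf.displacement_mem (v - a)
  obtain ⟨c, hcS, hc⟩ := hf.exists_add_displacement_eq (v - a) haS
  rw [sub_add_cancel, ← ha] at hc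
  rcases hS.eq_or_eq_or_add_eq_zero a haS a haS _ hbS c hcS hc with hab | hac | hzero
  · exact hab.symm
  · rw [← hac] at hc
    exact (add_right_cancel hc).symm
  · exact absurd hzero (hS.add_self_ne_zero a haS)

theorem displacement_add_displacement (hf : IsCayleyTranslation S f) (hS : IsSymmSidon S) (v : G) :
    displacement f (v + displacement f v) = displacement f v := by
  rw [add_displacement]
  set c := displacement f (f v) with hc
  have hback : f (f v - c) = f v := by
    rw [← add_displacement f (f v - c), hf.displacement_sub_displacement hS, ← hc, sub_add_cancel]
  have hv : f v - c = v := hf.injective hback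
  rw [displacement, sub_eq_iff_eq_add'.mpr (sub_eq_iff_eq_add.mp hv)]

theorem periodic_displacement_of_mem (hf : IsCayleyTranslation S f) (hS : IsSymmSidon S) {s : G}
    (hs : s ∈ S) : Function.Periodic (displacement f) s := by
  intro v
  obtain ⟨c, hcS, hc⟩ := hf.exists_add_displacement_eq v hs
  have hvS : displacement f v ∈ S := hf.displacement_mem v
  rcases hS.eq_or_eq_or_add_eq_zero s hs _ (hf.displacement_mem _) _ hvS c hcS hc
    with hsv | rfl | hzero
  · rw [hsv, hf.displacement_add_displacement hS]
  · rw [add_comm] at hc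
    exact add_right_cancel hc
  · have hreturn := hf.displacement_add_displacement hS (v + s)
    rw [add_assoc, hzero, add_zero] at hreturn
    exact hreturn.symm

theorem exists_eq_add_const (hf : IsCayleyTranslation S f) (hS : IsSymmSidon S)
    (hgen : AddSubgroup.closure S = ⊤) : ∃ s ∈ S, f = fun v => v + s := by
  have hperiodic (g : G) : Function.Periodic (displacement f) g := by
    have hg : g ∈ AddSubgroup.closure S := hgen ▸ AddSubgroup.mem_top g
    induction hg using AddSubgroup.closure_induction with
    | mem s hs => exact hf.periodic_displacement_of_mem hS hs
    | zero => exact Function.periodic_with_period_zero _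
    | add g h _ _ hg hh => exact hg.add_period hh
    | neg g _ hg => exact hg.neg
  refine ⟨displacement f 0, hf.displacement_mem 0, funext fun v => ?_⟩
  rw [← hperiodic v 0, zero_add, add_displacement]

end IsCayleyTranslation

end Cayley

section SignedBasis

variable {ι : Type*} [DecidableEq ι] (R : ι → Type*) [∀ i, AddCommGroupWithOne (R i)]

/-- The signed canonical basis vectors `±eᵢ` of a product, indexed by the coordinate `i` and the
sign. -/
def signedBasis (p : ι × ℤˣ) : ∀ i, R i := Pi.single p.1 ((p.2 : ℤ) : R p.1)

theorem signedBasis_one (i : ι) : signedBasis R (i, 1) = Pi.single i 1 := by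
  simp only [signedBasis, Units.val_one, Int.cast_one]

theorem signedBasis_neg (i : ι) (u : ℤˣ) : signedBasis R (i, -u) = -signedBasis R (i, u) := by
  simp only [signedBasis, Units.val_neg, Int.cast_neg, Pi.single_neg]

theorem neg_signedBasis_mem_range (p : ι × ℤˣ) : -signedBasis R p ∈ Set.range (signedBasis R) :=
  ⟨(p.1, -p.2), signedBasis_neg R p.1 p.2⟩

theorem closure_range_signedBasis [Finite ι]
    (hR : ∀ i, Function.Surjective (Int.cast : ℤ → R i)) :
    AddSubgroup.closure (Set.range (signedBasis R)) = ⊤ := by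
  have := Fintype.ofFinite ι
  refine (AddSubgroup.eq_top_iff' _).mpr fun x => ?_
  rw [← Finset.univ_sum_single x]
  refine AddSubgroup.sum_mem _ fun i _ => ?_
  obtain ⟨n, hn⟩ := hR i (x i)
  have hsingle : Pi.single i (x i) = n • signedBasis R (i, 1) := by
    rw [signedBasis_one, ← Pi.single_smul, zsmul_one, hn]
  rw [hsingle]
  exact AddSubgroup.zsmul_mem _ (AddSubgroup.subset_closure (Set.mem_range_self _)) n

variable {R}

theorem signedBasis_apply_of_ne {p : ι × ℤˣ} {i : ι} (h : p.1 ≠ i) : signedBasis R p i = 0 :=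
  Pi.single_eq_of_ne' h _

theorem eq_or_signedBasis_add_eq_zero {p q : ι × ℤˣ} (h : p.1 = q.1) :
    p = q ∨ signedBasis R p + signedBasis R q = 0 := by
  obtain ⟨i, u⟩ := p
  obtain ⟨j, w⟩ := q
  obtain rfl : i = j := h
  rcases eq_or_ne u w with rfl | huw
  · exact Or.inl rfl
  · rw [Int.units_ne_iff_eq_neg.mp huw, signedBasis_neg, neg_add_cancel]
    exact Or.inr rfl

theorem nsmul_signedBasis_apply_self_ne_zero {p : ι × ℤˣ} {m n : ℕ} (hm : (m : R p.1) ≠ 0)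
    (hnm : n ∣ m) : n • signedBasis R p p.1 ≠ 0 := by
  obtain ⟨k, rfl⟩ := hnm
  intro hn
  have hmul : (n * k) • signedBasis R p p.1 = 0 := by rw [mul_nsmul, hn, nsmul_zero]
  rcases Int.units_eq_one_or p.2 with hp | hp <;>
    exact hm (by simpa [signedBasis, hp] using hmul)

theorem signedBasis_add_self_ne_zero {p : ι × ℤˣ} (h2 : (2 : R p.1) ≠ 0) :
    signedBasis R p + signedBasis R p ≠ 0 := by
  intro h
  refine nsmul_signedBasis_apply_self_ne_zero (n := 2) (mod_cast h2) dvd_rfl ?_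
  rw [two_nsmul]
  exact congrFun h p.1

theorem signedBasis_injective (h2 : ∀ i, (2 : R i) ≠ 0) : Function.Injective (signedBasis R) := by
  intro p q hpq
  have hfst : p.1 = q.1 := by
    by_contra hne
    refine nsmul_signedBasis_apply_self_ne_zero (R := R) (m := 2) (mod_cast h2 p.1) (one_dvd 2) ?_
    rw [one_nsmul, hpq, signedBasis_apply_of_ne (Ne.symm hne)]
  refine (eq_or_signedBasis_add_eq_zero (R := R) hfst).resolve_right fun hsum => ?_
  rw [← hpq] at hsum
  exact signedBasis_add_self_ne_zero (h2 p.1) hsum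

theorem signedBasis_add_eq_zero_of_sum_four_eq_zero (h4 : ∀ i, (4 : R i) ≠ 0) {p q r s : ι × ℤˣ}
    (h : signedBasis R p + signedBasis R q + signedBasis R r + signedBasis R s = 0) :
    signedBasis R p + signedBasis R q = 0 ∨ signedBasis R p + signedBasis R r = 0 ∨
      signedBasis R p + signedBasis R s = 0 := by
  by_contra! hne
  obtain ⟨hq, hr, hs⟩ := hne
  have hcoord (i : ι) :
      signedBasis R p i + signedBasis R q i + signedBasis R r i + signedBasis R s i = 0 :=
    congrFun h i
  have eq_or_fst_ne {t : ι × ℤˣ} (ht : signedBasis R p + signedBasis R t ≠ 0) :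
      t = p ∨ t.1 ≠ p.1 := by
    by_contra! hcon
    exact hcon.1 ((eq_or_signedBasis_add_eq_zero hcon.2.symm).resolve_right ht).symm
  have nsmul_ne_zero (n : ℕ) (hn : n ∣ 4) (t : ι × ℤˣ) : n • signedBasis R t t.1 ≠ 0 :=
    nsmul_signedBasis_apply_self_ne_zero (mod_cast h4 t.1) hn
  -- If one, two or four of the vectors equal `±eᵢ`, their sum has `i`-th coordinate `±1`, `±2` or
  -- `±4`; if three do, the fourth vector is alone in its direction.
  rcases eq_or_fst_ne hq with hq | hq <;> rcases eq_or_fst_ne hr with hr | hr <;>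
    rcases eq_or_fst_ne hs with hs | hs
  · exact nsmul_ne_zero 4 dvd_rfl p (by simpa [succ_nsmul, hq, hr, hs] using hcoord p.1)
  · exact nsmul_ne_zero 1 (one_dvd 4) s
      (by simpa [hq, hr, signedBasis_apply_of_ne hs.symm] using hcoord s.1)
  · exact nsmul_ne_zero 1 (one_dvd 4) r
      (by simpa [hq, hs, signedBasis_apply_of_ne hr.symm] using hcoord r.1)
  · exact nsmul_ne_zero 2 (by decide) p
      (by simpa [two_nsmul, hq, signedBasis_apply_of_ne hr, signedBasis_apply_of_ne hs]
        using hcoord p.1)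
  · exact nsmul_ne_zero 1 (one_dvd 4) q
      (by simpa [hr, hs, signedBasis_apply_of_ne hq.symm] using hcoord q.1)
  · exact nsmul_ne_zero 2 (by decide) p
      (by simpa [two_nsmul, hr, signedBasis_apply_of_ne hq, signedBasis_apply_of_ne hs]
        using hcoord p.1)
  · exact nsmul_ne_zero 2 (by decide) p
      (by simpa [two_nsmul, hs, signedBasis_apply_of_ne hq, signedBasis_apply_of_ne hr]
        using hcoord p.1)
  · exact nsmul_ne_zero 1 (one_dvd 4) p
      (by simpa [signedBasis_apply_of_ne hq, signedBasis_apply_of_ne hr,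
        signedBasis_apply_of_ne hs] using hcoord p.1)

theorem two_ne_zero_of_four_ne_zero {A : Type*} [AddCommGroupWithOne A] (h4 : (4 : A) ≠ 0) :
    (2 : A) ≠ 0 := by
  intro h2
  have hsum : (4 : A) = 2 + 2 := by norm_cast
  exact h4 (by rw [hsum, h2, add_zero])

theorem isSymmSidon_range_signedBasis (h4 : ∀ i, (4 : R i) ≠ 0) :
    IsSymmSidon (Set.range (signedBasis R)) where
  add_self_ne_zero := by
    rintro _ ⟨p, rfl⟩
    exact signedBasis_add_self_ne_zero (two_ne_zero_of_four_ne_zero (h4 p.1))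
  eq_or_eq_or_add_eq_zero := by
    rintro _ ⟨p, rfl⟩ _ ⟨q, rfl⟩ _ ⟨r, rfl⟩ _ ⟨s, rfl⟩ h
    obtain ⟨r', hr'⟩ := neg_signedBasis_mem_range R r
    obtain ⟨s', hs'⟩ := neg_signedBasis_mem_range R s
    have hsum : signedBasis R p + signedBasis R q + signedBasis R r' + signedBasis R s' = 0 := by
      rw [hr', hs', h]
      abel
    rcases signedBasis_add_eq_zero_of_sum_four_eq_zero h4 hsum with hpq | hpr | hps
    · exact Or.inr (Or.inr hpq)
    · rw [hr', ← sub_eq_add_neg, sub_eq_zero] at hpr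
      exact Or.inl hpr
    · rw [hs', ← sub_eq_add_neg, sub_eq_zero] at hps
      exact Or.inr (Or.inl hps)

end SignedBasis

section CyclicGrid

variable {d : ℕ} {ℓ : Fin d → ℕ}

theorem four_ne_zero_of_not_dvd {n : ℕ} (hn : ¬ n ∣ 4) : (4 : ZMod n) ≠ 0 :=
  fun h => hn ((ZMod.natCast_eq_zero_iff 4 n).mp (mod_cast h))

theorem cycBasis_eq_signedBasis (i : Fin d) :
    cycBasis d ℓ i = signedBasis (fun j => ZMod (ℓ j)) (i, 1) := by
  rw [signedBasis_one]
  funext j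
  rcases eq_or_ne j i with rfl | hji
  · simp only [cycBasis, if_true, Pi.single_eq_same]
  · simp only [cycBasis, if_neg hji, Pi.single_eq_of_ne hji]

theorem cycAdj_iff_sub_mem_range {v w : ∀ j, ZMod (ℓ j)} :
    CycAdj d ℓ v w ↔ w - v ∈ Set.range (signedBasis fun j => ZMod (ℓ j)) := by
  simp only [CycAdj, cycBasis_eq_signedBasis]
  constructor
  · rintro ⟨i, h | h⟩
    · rw [← neg_sub, h]
      exact neg_signedBasis_mem_range _ _
    · exact ⟨(i, 1), h.symm⟩
  · rintro ⟨⟨i, u⟩, h⟩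
    rcases Int.units_eq_one_or u with rfl | rfl
    · exact ⟨i, Or.inr h.symm⟩
    · exact ⟨i, Or.inl (by rw [← neg_sub, ← h, signedBasis_neg, neg_neg])⟩

theorem isPerfectTranslation_add_signedBasis (p : Fin d × ℤˣ) :
    IsPerfectTranslation d ℓ fun v => v + signedBasis (fun j => ZMod (ℓ j)) p where
  bij := (Equiv.addRight _).bijective
  adj_map v := cycAdj_iff_sub_mem_range.mpr ⟨p, (add_sub_cancel_left _ _).symm⟩
  pres v w := by simp only [cycAdj_iff_sub_mem_range, add_sub_add_right_eq_sub]

theorem IsPerfectTranslation.isCayleyTranslation {f : (∀ j, ZMod (ℓ j)) → ∀ j, ZMod (ℓ j)}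
    (hf : IsPerfectTranslation d ℓ f) :
    IsCayleyTranslation (Set.range (signedBasis fun j => ZMod (ℓ j))) f where
  injective := hf.bij.injective
  sub_mem v := cycAdj_iff_sub_mem_range.mp (hf.adj_map v)
  map_sub_map_mem v w h :=
    cycAdj_iff_sub_mem_range.mp ((hf.pres v w).mp (cycAdj_iff_sub_mem_range.mpr h))

theorem isPerfectTranslation_iff (hℓ : ∀ i, ¬ ℓ i ∣ 4)
    {f : (∀ j, ZMod (ℓ j)) → ∀ j, ZMod (ℓ j)} :
    IsPerfectTranslation d ℓ f ↔
      ∃ p, (fun v => v + signedBasis (fun j => ZMod (ℓ j)) p) = f := by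
  constructor
  · intro hf
    have hSidon := isSymmSidon_range_signedBasis fun i => four_ne_zero_of_not_dvd (hℓ i)
    have hgen := closure_range_signedBasis (fun j => ZMod (ℓ j)) fun _ => ZMod.intCast_surjective
    obtain ⟨_, ⟨p, rfl⟩, hfp⟩ := hf.isCayleyTranslation.exists_eq_add_const hSidon hgen
    exact ⟨p, hfp.symm⟩
  · rintro ⟨p, rfl⟩
    exact isPerfectTranslation_add_signedBasis p

end CyclicGrid

/-- A length `ℓ i = 0` makes the grid infinite in direction `i`, as `ZMod 0 = ℤ`. -/
theorem card_perfect_translations_general (d : ℕ) (ℓ : Fin d → ℕ) (hℓ : ∀ i, ¬ ℓ i ∣ 4) :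
    Nat.card {f : (∀ j, ZMod (ℓ j)) → (∀ j, ZMod (ℓ j)) //
      IsPerfectTranslation d ℓ f} = 2 * d := by
  have hinj : Function.Injective
      fun (p : Fin d × ℤˣ) v => v + signedBasis (fun j => ZMod (ℓ j)) p := by
    intro p q hpq
    have h2 (i : Fin d) := two_ne_zero_of_four_ne_zero (four_ne_zero_of_not_dvd (hℓ i))
    exact signedBasis_injective h2 (add_left_cancel (congrFun hpq 0))
  calc
    _ = Nat.card (Set.range
          fun (p : Fin d × ℤˣ) v => v + signedBasis (fun j => ZMod (ℓ j)) p) :=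
      Nat.card_congr (Equiv.subtypeEquivRight fun _ => isPerfectTranslation_iff hℓ)
    _ = Nat.card (Fin d × ℤˣ) := Nat.card_range_of_injective hinj
    _ = 2 * d := by
      rw [Nat.card_prod, Nat.card_fin, Nat.card_eq_fintype_card, Fintype.card_units_int, mul_comm]

theorem card_perfect_translations (d : ℕ) (hd : 1 ≤ d) (ℓ : Fin d → ℕ)
    (hℓ : ∀ i, 5 ≤ ℓ i) :
    Nat.card {f : (∀ j, ZMod (ℓ j)) → (∀ j, ZMod (ℓ j)) //
      IsPerfectTranslation d ℓ f} = 2 * d :=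
  card_perfect_translations_general d ℓ fun i => Nat.not_dvd_of_pos_of_lt four_pos (hℓ i)
end

section
/- Let G be a noncyclic grid graph with parameters d ≥ 1 and lengths ℓ₁,…,ℓ_d satisfying ℓᵢ ≥ 2·(ℓ_{i+1}·…·ℓ_d) + 2 for all i ∈ {1,…,d−1} and ℓ_d ≥ 3. Let f be a candidate graphical translation of G maximizing |V₀,f| among all candidate graphical translations of G. Then |V₀,f| ≥ (ℓ₁ − 1)·ℓ₂·…·ℓ_d. -/
/-- Membership in the vertex set of the noncyclic grid graph with parameters `d` and `ℓ`:
`V = [0, ℓ₁ - 1] × ⋯ × [0, ℓ_d - 1] ⊆ ℤ^d`. -/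
def InGrid (d : ℕ) (ℓ : Fin d → ℕ) (v : Fin d → ℤ) : Prop :=
  ∀ i, 0 ≤ v i ∧ v i < ℓ i

/-- Adjacency in the noncyclic grid graph: taxicab distance equal to `1`. -/
def TaxiAdj {d : ℕ} (v w : Fin d → ℤ) : Prop :=
  (∑ i, |v i - w i|) = 1

/-- The `i`-th canonical basis vector of `ℤ^d`. -/
def gridBasis (d : ℕ) (i : Fin d) : Fin d → ℤ :=
  fun j => if j = i then 1 else 0

/-- A candidate graphical translation of the noncyclic grid graph with parameters `d`
and `ℓ`: a map `f : V → V ∪ {ω}` (modeled with `Option`, `none` being the black hole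
`ω`) that is injective on `V₀,f = f⁻¹(V)`, maps every vertex of `V₀,f` to a neighbor,
and preserves (non-)adjacency both ways on `V₀,f`. -/
structure IsCandidateGridTranslation (d : ℕ) (ℓ : Fin d → ℕ)
    (f : {v : Fin d → ℤ // InGrid d ℓ v} → Option {v : Fin d → ℤ // InGrid d ℓ v}) :
    Prop where
  inj : ∀ v w x, f v = some x → f w = some x → v = w
  adj_map : ∀ v w, f v = some w → TaxiAdj v.1 w.1
  pres : ∀ v₁ v₂ w₁ w₂, f v₁ = some w₁ → f v₂ = some w₂ →
    (TaxiAdj v₁.1 v₂.1 ↔ TaxiAdj w₁.1 w₂.1)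

/-- The translation by `u` as a partial map of the grid: a vertex that `u` moves out of the grid
is sent to the black hole `none`. -/
noncomputable def gridTranslate {d : ℕ} (ℓ : Fin d → ℕ) (u : Fin d → ℤ)
    (v : {v : Fin d → ℤ // InGrid d ℓ v}) : Option {v : Fin d → ℤ // InGrid d ℓ v} :=
  open Classical in if h : InGrid d ℓ (v.1 + u) then some ⟨v.1 + u, h⟩ else none

section

variable {d : ℕ} {ℓ : Fin d → ℕ} {u : Fin d → ℤ}

theorem taxiAdj_add_right_iff {v w : Fin d → ℤ} : TaxiAdj (v + u) (w + u) ↔ TaxiAdj v w := by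
  simp only [TaxiAdj, Pi.add_apply, add_sub_add_right_eq_sub]

theorem taxiAdj_self_add_iff {v : Fin d → ℤ} : TaxiAdj v (v + u) ↔ ∑ k, |u k| = 1 := by
  simp only [TaxiAdj, Pi.add_apply, sub_add_cancel_left, abs_neg]

theorem sum_abs_gridBasis (i : Fin d) : ∑ k, |gridBasis d i k| = 1 := by
  simp [gridBasis, apply_ite abs]

theorem gridTranslate_eq_some_iff {v w : {v : Fin d → ℤ // InGrid d ℓ v}} :
    gridTranslate ℓ u v = some w ↔ v.1 + u = w.1 := by
  rw [gridTranslate]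
  split_ifs with h
  · simp only [Option.some.injEq, Subtype.ext_iff]
  · simp only [false_iff]
    exact fun hw => h (hw ▸ w.2)

theorem gridTranslate_ne_none_iff {v : {v : Fin d → ℤ // InGrid d ℓ v}} :
    gridTranslate ℓ u v ≠ none ↔ InGrid d ℓ (v.1 + u) := by
  simp [gridTranslate]

theorem isCandidateGridTranslation_gridTranslate (hu : ∑ k, |u k| = 1) :
    IsCandidateGridTranslation d ℓ (gridTranslate ℓ u) where
  inj v w x hv hw := by
    rw [gridTranslate_eq_some_iff] at hv hw
    exact Subtype.ext (add_right_cancel (hv.trans hw.symm))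
  adj_map v w h := by
    rw [← gridTranslate_eq_some_iff.mp h]
    exact taxiAdj_self_add_iff.mpr hu
  pres v₁ v₂ w₁ w₂ h₁ h₂ := by
    rw [← gridTranslate_eq_some_iff.mp h₁, ← gridTranslate_eq_some_iff.mp h₂]
    exact taxiAdj_add_right_iff.symm

theorem inGrid_and_inGrid_add_iff_mem_piFinset {v : Fin d → ℤ} :
    InGrid d ℓ v ∧ InGrid d ℓ (v + u) ↔
      v ∈ Fintype.piFinset fun k => Finset.Ico (max 0 (-u k)) (min (ℓ k) (ℓ k - u k)) := by
  simp only [InGrid, ← forall_and, Pi.add_apply, Fintype.mem_piFinset, Finset.mem_Ico]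
  exact forall_congr' fun k => by omega

theorem ncard_gridTranslate_ne_none (ℓ : Fin d → ℕ) (u : Fin d → ℤ) :
    Set.ncard {v | gridTranslate ℓ u v ≠ none} = ∏ k, (ℓ k - (u k).natAbs) := by
  have image_val : Subtype.val '' {v | gridTranslate ℓ u v ≠ none} =
      (Fintype.piFinset fun k => Finset.Ico (max 0 (-u k)) (min (ℓ k : ℤ) (ℓ k - u k)) :
        Set (Fin d → ℤ)) := by
    ext v
    rw [Finset.mem_coe, ← inGrid_and_inGrid_add_iff_mem_piFinset]
    constructor
    · rintro ⟨v, hv, rfl⟩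
      exact ⟨v.2, gridTranslate_ne_none_iff.mp hv⟩
    · rintro ⟨hv, hvu⟩
      exact ⟨⟨v, hv⟩, gridTranslate_ne_none_iff.mpr hvu, rfl⟩
  rw [← Set.ncard_image_of_injective _ Subtype.val_injective, image_val, Set.ncard_coe_finset,
    Fintype.card_piFinset]
  refine Finset.prod_congr rfl fun k _ => ?_
  rw [Int.card_Ico]
  omega

theorem ncard_gridTranslate_gridBasis_ne_none (ℓ : Fin d → ℕ) (i : Fin d) :
    Set.ncard {v | gridTranslate ℓ (gridBasis d i) v ≠ none} =
      (ℓ i - 1) * ∏ k with k ≠ i, ℓ k := by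
  rw [ncard_gridTranslate_ne_none, ← Finset.mul_prod_erase _ _ (Finset.mem_univ i),
    Finset.filter_ne']
  congr 1
  · simp [gridBasis]
  · exact Finset.prod_congr rfl fun k hk => by simp [gridBasis, Finset.ne_of_mem_erase hk]

theorem maximal_candidate_lower_bound_general
    {f : {v : Fin d → ℤ // InGrid d ℓ v} → Option {v : Fin d → ℤ // InGrid d ℓ v}}
    (hf : MaximalFor (IsCandidateGridTranslation d ℓ) (fun g => Set.ncard {v | g v ≠ none}) f)
    (i : Fin d) :
    (ℓ i - 1) * ∏ k with k ≠ i, ℓ k ≤ Set.ncard {v | f v ≠ none} := by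
  rw [← ncard_gridTranslate_gridBasis_ne_none]
  exact hf.le (isCandidateGridTranslation_gridTranslate (sum_abs_gridBasis i))

end

theorem maximal_candidate_lower_bound
    (d : ℕ) (hd : 0 < d) (ℓ : Fin d → ℕ)
    (hℓ : ∀ i : Fin d, (i : ℕ) + 1 < d →
      2 * (∏ k ∈ Finset.univ.filter (fun k : Fin d => i < k), ℓ k) + 2 ≤ ℓ i)
    (hlast : 3 ≤ ℓ ⟨d - 1, by omega⟩)
    (f : {v : Fin d → ℤ // InGrid d ℓ v} → Option {v : Fin d → ℤ // InGrid d ℓ v})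
    (hf : IsCandidateGridTranslation d ℓ f)
    (hmax : ∀ g, IsCandidateGridTranslation d ℓ g →
      Set.ncard {v | g v ≠ none} ≤ Set.ncard {v | f v ≠ none})
    :
    (ℓ ⟨0, hd⟩ - 1) * ∏ k ∈ Finset.univ.filter (fun k : Fin d => 0 < (k : ℕ)), ℓ k ≤
      Set.ncard {v | f v ≠ none} := by
  simpa only [Nat.pos_iff_ne_zero, ne_eq, Fin.ext_iff] using
    maximal_candidate_lower_bound_general ⟨hf, fun g hg _ => hmax g hg⟩ ⟨0, hd⟩
end

section
/- Let G be a noncyclic grid graph with parameters d ≥ 1 and lengths ℓ₁,…,ℓ_d satisfying ℓᵢ ≥ 2·(ℓ_{i+1}·…·ℓ_d) + 2 for all i ∈ {1,…,d−1} and ℓ_d ≥ 3. Let f be a candidate graphical translation of G maximizing |V₀,f| among all candidate graphical translations of G. Then there exists m such that the slices (m,1)^⊥ and (m+1,1)^⊥ are both contained in V₀,f, and moreover f((m,1)^⊥ ∪ (m+1,1)^⊥) is not contained in (m,1)^⊥ ∪ (m+1,1)^⊥. -/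
/-!
In dimension `d ≥ 2`, call two consecutive slices a slab, and suppose that a slab lies in the domain
of `f` and that `f` maps it into itself. Then `f` permutes the slab. At a vertex with all other
coordinates `0`, the image can only lie in the other slice, and this propagates to the whole slab by
induction on the sum of these coordinates, so `f` swaps the two slices. A vertex next to the slab
then has no possible image: both slices bordering the slab are lost.

Comparing with a unit shift, a maximal `f` loses at most `P` vertices, where `P` is the size of a
slice. Since there are more than `P` disjoint slabs, one of them lies in the domain. If `f` maps it
into itself, then one bordering slice accounts for all the lost vertices. A slab away from that slice
still lies in the domain and borders a slice that is not lost, so `f` cannot map it into itself.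
-/

/-- The vertex set of the noncyclic grid graph as a type. -/
abbrev GridVertex (d : ℕ) (ℓ : Fin d → ℕ) : Type := {v : Fin d → ℤ // InGrid d ℓ v}

/-- The slice `(c, i)^⊥`; it is empty unless `0 ≤ c < ℓ i`. -/
def gridSlice {d : ℕ} (ℓ : Fin d → ℕ) (i : Fin d) (c : ℤ) : Set (GridVertex d ℓ) :=
  {u | u.1 i = c}

/-- The slab `(m, i)^⊥ ∪ (m + 1, i)^⊥`; either slice may be empty. -/
def gridSlab {d : ℕ} (ℓ : Fin d → ℕ) (i : Fin d) (m : ℤ) : Set (GridVertex d ℓ) :=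
  {u | u.1 i = m ∨ u.1 i = m + 1}

/-- The vertices sent to the black hole `ω`; the complement is the domain `V₀,f`. -/
def lostVertices {α : Type*} (f : α → Option α) : Set α :=
  {v | f v = none}

/-- The set `S` lies in the domain of the partial map `f`, which maps it into itself. -/
def IsInvariantOn {α : Type*} (f : α → Option α) (S : Set α) : Prop :=
  ∀ v ∈ S, ∃ w ∈ S, f v = some w

/-- The reflection of `ℤ^d` exchanging the slices `m` and `m + 1` in direction `i`. -/
def slabReflection {d : ℕ} (i : Fin d) (m : ℤ) (x : Fin d → ℤ) : Fin d → ℤ :=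
  x + Pi.single i (2 * m + 1 - 2 * x i)

/-- The slab starting at `m` lies in the domain of `f`, but is not mapped into itself: this is the
property of the two slices asserted by the theorem. -/
def IsEscapingSlab {d : ℕ} {ℓ : Fin d → ℕ} (f : GridVertex d ℓ → Option (GridVertex d ℓ))
    (i : Fin d) (m : ℤ) : Prop :=
  gridSlab ℓ i m ⊆ {u | f u ≠ none} ∧
    ∃ u ∈ gridSlab ℓ i m, ∃ w, f u = some w ∧ w ∉ gridSlab ℓ i m

section TaxiAdj

variable {d : ℕ} {v w x : Fin d → ℤ} {i j : Fin d}

lemma taxiAdj_add_single (v : Fin d → ℤ) (i : Fin d) (s : ℤˣ) :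
    TaxiAdj v (v + Pi.single i (s : ℤ)) := by
  rw [TaxiAdj, Finset.sum_eq_single i]
  · rcases Int.units_eq_one_or s with rfl | rfl <;> simp
  · intro j _ hj
    simp [hj]
  · simp

lemma TaxiAdj.exists_eq_add_single (h : TaxiAdj v w) :
    ∃ (i : Fin d) (s : ℤˣ), w = v + Pi.single i (s : ℤ) := by
  obtain ⟨i, hi⟩ : ∃ i, v i ≠ w i := by
    by_contra! heq
    simp [TaxiAdj, heq] at h
  rw [TaxiAdj, ← Finset.add_sum_erase _ _ (Finset.mem_univ i)] at h
  have hone : 1 ≤ |v i - w i| := Int.one_le_abs (sub_ne_zero.mpr hi)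
  have hnonneg : ∀ k ∈ Finset.univ.erase i, 0 ≤ |v k - w k| := fun _ _ => abs_nonneg _
  have hrest : ∀ k ∈ Finset.univ.erase i, |v k - w k| = 0 := by
    rw [← Finset.sum_eq_zero_iff_of_nonneg hnonneg]
    linarith [Finset.sum_nonneg hnonneg]
  have hunit : IsUnit (w i - v i) := by
    rw [Int.isUnit_iff_abs_eq, abs_sub_comm]
    linarith [Finset.sum_nonneg hnonneg]
  refine ⟨i, hunit.unit, ?_⟩
  ext k
  by_cases hk : k = i
  · subst hk
    simp
  · have hvw := hrest k (by simp [hk])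
    rw [abs_eq_zero] at hvw
    simp only [Pi.add_apply, Pi.single_eq_of_ne hk]
    omega

lemma TaxiAdj.symm (h : TaxiAdj v w) : TaxiAdj w v := by
  simpa only [TaxiAdj, abs_sub_comm] using h

/-- `i = j → s = t` says that the second step does not undo the first. -/
lemma TaxiAdj.eq_or_eq_of_add_single_add_single {s t : ℤˣ} (hst : i = j → s = t)
    (hvx : TaxiAdj v x) (hxz : TaxiAdj x (v + Pi.single i (s : ℤ) + Pi.single j (t : ℤ))) :
    x = v + Pi.single i (s : ℤ) ∨ x = v + Pi.single j (t : ℤ) := by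
  obtain ⟨k, a, rfl⟩ := hvx.exists_eq_add_single
  obtain ⟨l, b, h⟩ := hxz.exists_eq_add_single
  have hstep : (k = i ∧ a = s) ∨ (k = j ∧ a = t) := by
    have hi := congrFun h i
    have hj := congrFun h j
    have hk := congrFun h k
    simp only [Pi.add_apply, Pi.single_apply] at hi hj hk
    have hs := Int.isUnit_iff.1 s.isUnit
    have ht := Int.isUnit_iff.1 t.isUnit
    have ha := Int.isUnit_iff.1 a.isUnit
    have hb := Int.isUnit_iff.1 b.isUnit
    rw [Units.ext_iff] at hst
    rw [Units.ext_iff, Units.ext_iff]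
    clear h hvx hxz
    grind
  rcases hstep with ⟨rfl, rfl⟩ | ⟨rfl, rfl⟩ <;> simp

end TaxiAdj

lemma IsInvariantOn.exists_eq_some {α : Type*} {f : α → Option α} {S : Set α}
    (h : IsInvariantOn f S) (hS : S.Finite) (hf : ∀ v w x, f v = some x → f w = some x → v = w)
    {w : α} (hw : w ∈ S) : ∃ v ∈ S, f v = some w := by
  choose! g hgS hg using h
  have hinj : Set.InjOn g S := fun v hv v' hv' heq =>
    hf v v' (g v) (hg v hv) (heq ▸ hg v' hv')
  obtain ⟨v, hv, rfl⟩ := ((hS.injOn_iff_bijOn_of_mapsTo hgS).1 hinj).surjOn hw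
  exact ⟨v, hv, hg v hv⟩

lemma IsInvariantOn.mem {α : Type*} {f : α → Option α} {S : Set α} (h : IsInvariantOn f S)
    {v w : α} (hv : v ∈ S) (hvw : f v = some w) : w ∈ S := by
  obtain ⟨w', hw', h'⟩ := h v hv
  exact Option.some.inj (hvw.symm.trans h') ▸ hw'

section Grid

variable {d : ℕ} {ℓ : Fin d → ℕ} {i j : Fin d} {m c : ℤ} {v : GridVertex d ℓ}

instance finite_gridVertex (d : ℕ) (ℓ : Fin d → ℕ) : Finite (GridVertex d ℓ) :=
  ((Set.Finite.pi' fun i => Set.finite_Ico (0 : ℤ) (ℓ i)).subset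
    fun _ hv i => (hv : InGrid d ℓ _) i).to_subtype

lemma inGrid_add_single {s : ℤ} (h0 : 0 ≤ v.1 j + s) (h1 : v.1 j + s < ℓ j) :
    InGrid d ℓ (v.1 + Pi.single j s) := by
  intro k
  by_cases hk : k = j
  · subst hk
    simpa using ⟨h0, h1⟩
  · simpa [hk] using v.2 k

lemma exists_mem_gridSlab_eq_add_single {s : ℤ} (hv : v ∈ gridSlab ℓ i m) (hji : j ≠ i)
    (h0 : 0 ≤ v.1 j + s) (h1 : v.1 j + s < ℓ j) :
    ∃ u ∈ gridSlab ℓ i m, u.1 = v.1 + Pi.single j s :=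
  ⟨⟨_, inGrid_add_single h0 h1⟩, by simpa [gridSlab, hji.symm] using hv, rfl⟩

lemma slabReflection_apply_of_ne (hji : j ≠ i) (x : Fin d → ℤ) : slabReflection i m x j = x j := by
  simp [slabReflection, hji]

lemma slabReflection_slabReflection (i : Fin d) (m : ℤ) (x : Fin d → ℤ) :
    slabReflection i m (slabReflection i m x) = x := by
  ext k
  by_cases hk : k = i
  · subst hk
    simp only [slabReflection, Pi.add_apply, Pi.single_eq_same]
    ring
  · simp only [slabReflection_apply_of_ne hk]

lemma exists_unit_eq_of_mem_gridSlab (hv : v ∈ gridSlab ℓ i m) :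
    ∃ s : ℤˣ, (s : ℤ) = 2 * m + 1 - 2 * v.1 i := by
  rcases hv with hv | hv
  · exact ⟨1, by simp [hv]⟩
  · exact ⟨-1, by simp [hv]; ring⟩

lemma IsInvariantOn.exists_swap {f : GridVertex d ℓ → Option (GridVertex d ℓ)}
    (hinv : IsInvariantOn f (gridSlab ℓ i m)) (hv : v ∈ gridSlab ℓ i m)
    (hswap : ∀ x ∈ gridSlab ℓ i m, (∀ k ≠ i, x.1 k = v.1 k) →
      ∀ y, f x = some y → y.1 = slabReflection i m x.1) :
    ∃ w, f v = some w ∧ f w = some v ∧ w.1 = slabReflection i m v.1 := by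
  obtain ⟨w, hwS, hvw⟩ := hinv v hv
  obtain ⟨x, -, hwx⟩ := hinv w hwS
  have hw : w.1 = slabReflection i m v.1 := hswap v hv (fun _ _ => rfl) w hvw
  have hx : x.1 = slabReflection i m w.1 :=
    hswap w hwS (fun k hk => by rw [hw, slabReflection_apply_of_ne hk]) x hwx
  have hxv : x = v := Subtype.ext (by rw [hx, hw, slabReflection_slabReflection])
  exact ⟨w, hvw, hxv ▸ hwx, hw⟩

lemma ncard_gridSlice (h0 : 0 ≤ c) (h1 : c < ℓ i) :
    (gridSlice ℓ i c).ncard = ∏ k ∈ Finset.univ.erase i, ℓ k := by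
  let box : Fin d → Finset ℤ := Function.update (fun k => Finset.Ico (0 : ℤ) (ℓ k)) i {c}
  have himage : Subtype.val '' gridSlice ℓ i c = (Fintype.piFinset box : Set (Fin d → ℤ)) := by
    ext v
    simp only [gridSlice, Set.mem_image, Set.mem_ofPred_eq, Subtype.exists, exists_and_left,
      exists_prop, exists_eq_right_right, Finset.mem_coe, Fintype.mem_piFinset]
    constructor
    · rintro ⟨hvi, hv⟩ k
      by_cases hk : k = i
      · subst hk
        simp [box, hvi]
      · simpa [box, hk] using hv k
    · intro hv
      have hvi : v i = c := by simpa [box] using hv i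
      refine ⟨hvi, fun k => ?_⟩
      by_cases hk : k = i
      · subst hk
        omega
      · simpa [box, hk] using hv k
  have hcard : ∀ k ∈ Finset.univ.erase i, (box k).card = ℓ k := by
    intro k hk
    simp [box, Finset.ne_of_mem_erase hk]
  rw [← Set.ncard_image_of_injective _ Subtype.val_injective, himage, Set.ncard_coe_finset,
    Fintype.card_piFinset, ← Finset.mul_prod_erase _ _ (Finset.mem_univ i),
    Finset.prod_congr rfl hcard]
  simp [box]

end Grid

section Shift

variable {d : ℕ} {ℓ : Fin d → ℕ} {i : Fin d} {v w : GridVertex d ℓ}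

open Classical in
/-- The translation by the `i`-th basis vector, which loses the last slice in direction `i`. -/
noncomputable def gridShift (ℓ : Fin d → ℕ) (i : Fin d) (v : GridVertex d ℓ) :
    Option (GridVertex d ℓ) :=
  if h : InGrid d ℓ (v.1 + Pi.single i 1) then some ⟨_, h⟩ else none

lemma eq_add_single_of_gridShift_eq_some (h : gridShift ℓ i v = some w) :
    w.1 = v.1 + Pi.single i 1 := by
  rw [gridShift, Option.dite_none_right_eq_some] at h
  obtain ⟨hgrid, h⟩ := h
  rw [← Option.some.inj h]

lemma isCandidateGridTranslation_gridShift (ℓ : Fin d → ℕ) (i : Fin d) :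
    IsCandidateGridTranslation d ℓ (gridShift ℓ i) where
  inj v w x hv hw := Subtype.ext <| add_right_cancel <|
    (eq_add_single_of_gridShift_eq_some hv).symm.trans (eq_add_single_of_gridShift_eq_some hw)
  adj_map v w h := by
    rw [eq_add_single_of_gridShift_eq_some h]
    exact taxiAdj_add_single v.1 i 1
  pres v₁ v₂ w₁ w₂ h₁ h₂ := by
    simp [TaxiAdj, eq_add_single_of_gridShift_eq_some h₁, eq_add_single_of_gridShift_eq_some h₂]

lemma lostVertices_gridShift (ℓ : Fin d → ℕ) (i : Fin d) :
    lostVertices (gridShift ℓ i) = gridSlice ℓ i (ℓ i - 1) := by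
  ext v
  simp only [lostVertices, gridSlice, gridShift, Set.mem_ofPred_eq, dite_eq_right_iff, reduceCtorEq,
    imp_false]
  have hv := v.2 i
  constructor
  · intro hout
    by_contra hlast
    exact hout (inGrid_add_single (by omega) (by omega))
  · intro hlast hgrid
    have hi := (hgrid i).2
    simp [hlast] at hi

lemma ncard_lostVertices_le_of_maximal {f : GridVertex d ℓ → Option (GridVertex d ℓ)}
    (hi : 0 < ℓ i)
    (hmax : ∀ g, IsCandidateGridTranslation d ℓ g →
      Set.ncard {v | g v ≠ none} ≤ Set.ncard {v | f v ≠ none}) :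
    (lostVertices f).ncard ≤ ∏ k ∈ Finset.univ.erase i, ℓ k := by
  have hdomain : (lostVertices (gridShift ℓ i))ᶜ.ncard ≤ (lostVertices f)ᶜ.ncard :=
    hmax _ (isCandidateGridTranslation_gridShift ℓ i)
  have hf := Set.ncard_add_ncard_compl (lostVertices f)
  have hshift := Set.ncard_add_ncard_compl (lostVertices (gridShift ℓ i))
  rw [lostVertices_gridShift, ncard_gridSlice (by omega) (by omega)] at hshift
  rw [lostVertices_gridShift] at hdomain
  omega

end Shift

namespace IsCandidateGridTranslation

variable {d : ℕ} {ℓ : Fin d → ℕ} {f : GridVertex d ℓ → Option (GridVertex d ℓ)} {i j : Fin d}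
  {m : ℤ} {u u' v w x z : GridVertex d ℓ}

lemma image_eq_or_eq (hf : IsCandidateGridTranslation d ℓ f) (hv : f v = some w)
    (hu : f u = some u') {s t : ℤˣ} (hst : i = j → s = t) (huv : u.1 = v.1 + Pi.single i (s : ℤ))
    (huu' : u'.1 = u.1 + Pi.single j (t : ℤ)) : w = u ∨ w.1 = v.1 + Pi.single j (t : ℤ) := by
  have hwu' : TaxiAdj w.1 u'.1 :=
    (hf.pres _ _ _ _ hv hu).1 (huv ▸ taxiAdj_add_single v.1 i s)
  rw [huu', huv] at hwu'
  exact ((hf.adj_map _ _ hv).eq_or_eq_of_add_single_add_single hst hwu').imp_left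
    fun h => Subtype.ext (h.trans huv.symm)

lemma preimage_eq_or_eq (hf : IsCandidateGridTranslation d ℓ f) (hv : f v = some w)
    (hx : f x = some z) {s t : ℤˣ} (hst : i = j → s = t) (hw : w.1 = v.1 + Pi.single i (s : ℤ))
    (hz : z.1 = w.1 + Pi.single j (t : ℤ)) : x = w ∨ x.1 = v.1 + Pi.single j (t : ℤ) := by
  have hvx : TaxiAdj v.1 x.1 := (hf.pres _ _ _ _ hv hx).2 (hz ▸ taxiAdj_add_single w.1 j t)
  have hxz : TaxiAdj x.1 z.1 := hf.adj_map _ _ hx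
  rw [hz, hw] at hxz
  exact (hvx.eq_or_eq_of_add_single_add_single hst hxz).imp_left
    fun h => Subtype.ext (h.trans hw.symm)

lemma eq_add_single_of_swap (hf : IsCandidateGridTranslation d ℓ f) (hu : f u = some u')
    (hu' : f u' = some u) (hv : f v = some w) (hji : j ≠ i) {s t : ℤˣ}
    (huv : u.1 = v.1 + Pi.single j (t : ℤ)) (huu' : u'.1 = u.1 + Pi.single i (s : ℤ)) :
    w.1 = v.1 + Pi.single i (s : ℤ) := by
  refine (hf.image_eq_or_eq hv hu (fun h => absurd h hji) huv huu').resolve_left fun hwu => ?_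
  have hvu' : v = u' := hf.inj _ _ _ hv (hwu ▸ hu')
  have hcoord := congrFun huu' j
  simp [← hvu', huv, hji] at hcoord

lemma eq_none_of_swap (hf : IsCandidateGridTranslation d ℓ f) (hu : f u = some u')
    (hu' : f u' = some u) {s : ℤˣ} (huv : u.1 = v.1 + Pi.single i (s : ℤ))
    (huu' : u'.1 = u.1 + Pi.single i (s : ℤ)) : f v = none := by
  rw [Option.eq_none_iff_forall_ne_some]
  intro w hv
  have hwu : w = u := (hf.image_eq_or_eq hv hu (fun _ => rfl) huv huu').elim id
    fun h => Subtype.ext (h.trans huv.symm)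
  have hvu' : v = u' := hf.inj _ _ _ hv (hwu ▸ hu')
  have hcoord := congrFun huu' i
  rw [← hvu', huv] at hcoord
  rcases Int.units_eq_one_or s with rfl | rfl <;> simp at hcoord <;> omega

lemma exists_eq_some_add_single (hf : IsCandidateGridTranslation d ℓ f)
    (hinv : IsInvariantOn f (gridSlab ℓ i m)) (hji : j ≠ i) (hw : w ∈ gridSlab ℓ i m)
    (hvw : f v = some w) {s : ℤˣ} (hwv : w.1 = v.1 + Pi.single j (s : ℤ))
    (h0 : 0 ≤ w.1 j + (s : ℤ)) (h1 : w.1 j + (s : ℤ) < ℓ j) :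
    ∃ z, f w = some z ∧ z.1 = w.1 + Pi.single j (s : ℤ) := by
  obtain ⟨z, hzS, hz⟩ := exists_mem_gridSlab_eq_add_single hw hji h0 h1
  obtain ⟨x, -, hxz⟩ := hinv.exists_eq_some (Set.toFinite _) hf.inj hzS
  have hxw : x = w := (hf.preimage_eq_or_eq hvw hxz (fun _ => rfl) hwv hz).elim id
    fun h => Subtype.ext (h.trans hwv.symm)
  exact ⟨z, hxw ▸ hxz, hz⟩

/-- If `v ↦ v + eⱼ`, then `v + eⱼ ↦ v + 2eⱼ`, so the preimage `y` of `v` also has `j`-th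
coordinate `0`, and no vertex is left to be the preimage of `y + eⱼ`. -/
lemma ne_add_single_of_apply_eq_zero (hf : IsCandidateGridTranslation d ℓ f)
    (hinv : IsInvariantOn f (gridSlab ℓ i m)) (hji : j ≠ i) (hj : 3 ≤ ℓ j)
    (hv : v ∈ gridSlab ℓ i m) (hvj : v.1 j = 0) (hvw : f v = some w) :
    w.1 ≠ v.1 + Pi.single j ((1 : ℤˣ) : ℤ) := by
  intro hw
  have hwj : w.1 j = 1 := by simp [hw, hvj]
  obtain ⟨z, hwz, hz⟩ := hf.exists_eq_some_add_single hinv hji (hinv.mem hv hvw) hvw hw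
    (by simp [hwj]) (by simp [hwj]; omega)
  have hzj : z.1 j = 2 := by simp [hz, hwj]
  obtain ⟨y, hyS, hyv⟩ := hinv.exists_eq_some (Set.toFinite _) hf.inj hv
  obtain ⟨k, a, hy⟩ := (hf.adj_map _ _ hyv).symm.exists_eq_add_single
  have hkj : k ≠ j := by
    rintro rfl
    rcases Int.units_eq_one_or a with rfl | rfl
    · have hyw : y = w := Subtype.ext (hy.trans hw.symm)
      obtain rfl : z = v := Option.some.inj (hwz.symm.trans (hyw ▸ hyv))
      omega
    · have hyk := (y.2 k).1
      simp [hy, hvj] at hyk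
  have hyj : y.1 j = 0 := by simp [hy, hkj.symm, hvj]
  obtain ⟨q, hqS, hq⟩ := exists_mem_gridSlab_eq_add_single (s := (1 : ℤˣ)) hyS hji
    (by simp [hyj]) (by simp [hyj]; omega)
  have hqj : q.1 j = 1 := by simp [hq, hyj]
  have hqw : q.1 = w.1 + Pi.single k (a : ℤ) := by rw [hq, hy, hw, add_right_comm]
  obtain ⟨x, -, hxq⟩ := hinv.exists_eq_some (Set.toFinite _) hf.inj hqS
  rcases hf.preimage_eq_or_eq hvw hxq (fun h => absurd h.symm hkj) hw hqw with rfl | hx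
  · obtain rfl : q = z := Option.some.inj (hxq.symm.trans hwz)
    omega
  · have hxy : x = y := Subtype.ext (hx.trans hy.symm)
    obtain rfl : q = v := Option.some.inj (hxq.symm.trans (hxy ▸ hyv))
    omega

lemma eq_slabReflection_of_forall_apply_eq_zero (hf : IsCandidateGridTranslation d ℓ f)
    (hinv : IsInvariantOn f (gridSlab ℓ i m)) (hℓ : ∀ j ≠ i, 3 ≤ ℓ j)
    (hv : v ∈ gridSlab ℓ i m) (hzero : ∀ j ≠ i, v.1 j = 0) (hvw : f v = some w) :
    w.1 = slabReflection i m v.1 := by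
  have hwS : w ∈ gridSlab ℓ i m := hinv.mem hv hvw
  obtain ⟨k, a, hw⟩ := (hf.adj_map _ _ hvw).exists_eq_add_single
  obtain rfl : k = i := by
    by_contra hk
    rcases Int.units_eq_one_or a with rfl | rfl
    · exact hf.ne_add_single_of_apply_eq_zero hinv hk (hℓ k hk) hv (hzero k hk) hvw hw
    · have hwk := (w.2 k).1
      simp [hw, hzero k hk] at hwk
  have ha : (a : ℤ) = 2 * m + 1 - 2 * v.1 k := by
    have hwk : w.1 k = v.1 k + a := by simp [hw]
    have hunit := Int.isUnit_iff.1 a.isUnit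
    simp only [gridSlab, Set.mem_ofPred_eq] at hv hwS
    omega
  rw [hw, slabReflection, ha]

lemma eq_slabReflection (hf : IsCandidateGridTranslation d ℓ f)
    (hinv : IsInvariantOn f (gridSlab ℓ i m)) (hℓ : ∀ j ≠ i, 3 ≤ ℓ j)
    (hv : v ∈ gridSlab ℓ i m) (hvw : f v = some w) : w.1 = slabReflection i m v.1 := by
  induction hn : (∑ k ∈ Finset.univ.erase i, v.1 k).toNat using Nat.strong_induction_on
    generalizing v w with
  | _ n ih =>
  by_cases hzero : ∀ j ≠ i, v.1 j = 0
  · exact hf.eq_slabReflection_of_forall_apply_eq_zero hinv hℓ hv hzero hvw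
  push Not at hzero
  obtain ⟨j, hji, hvj⟩ := hzero
  have hvj0 : 0 ≤ v.1 j := (v.2 j).1
  have hvjℓ : v.1 j < ℓ j := (v.2 j).2
  obtain ⟨u, huS, huv⟩ := exists_mem_gridSlab_eq_add_single (s := ((-1 : ℤˣ) : ℤ)) hv hji
    (by simp; omega) (by simp; omega)
  have hnonneg : 0 ≤ ∑ k ∈ Finset.univ.erase i, u.1 k := Finset.sum_nonneg fun k _ => (u.2 k).1
  have hlt : ∑ k ∈ Finset.univ.erase i, u.1 k < ∑ k ∈ Finset.univ.erase i, v.1 k := by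
    simp [huv, Finset.sum_add_distrib, Pi.single_apply, hji]
  obtain ⟨u', huu', hu'u, hu'⟩ := hinv.exists_swap huS fun x hxS hxu y hxy => by
    refine ih _ ?_ hxS hxy rfl
    have hsum : ∑ k ∈ Finset.univ.erase i, x.1 k = ∑ k ∈ Finset.univ.erase i, u.1 k :=
      Finset.sum_congr rfl fun k hk => hxu k (Finset.ne_of_mem_erase hk)
    omega
  obtain ⟨s, hs⟩ := exists_unit_eq_of_mem_gridSlab huS
  rw [slabReflection, ← hs] at hu'
  have hui : u.1 i = v.1 i := by simp [huv, hji.symm]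
  rw [hf.eq_add_single_of_swap huu' hu'u hvw hji huv hu', hs, hui, slabReflection]

lemma eq_none_of_adjacent_gridSlab (hf : IsCandidateGridTranslation d ℓ f)
    (hinv : IsInvariantOn f (gridSlab ℓ i m)) (hℓ : ∀ j ≠ i, 3 ≤ ℓ j) (h0 : 0 ≤ m)
    (h1 : m + 1 < ℓ i) (hv : v.1 i = m - 1 ∨ v.1 i = m + 2) : f v = none := by
  obtain ⟨s, hs⟩ : ∃ s : ℤˣ, (s : ℤ) = if v.1 i = m - 1 then 1 else -1 := by
    split_ifs
    exacts [⟨1, rfl⟩, ⟨-1, rfl⟩]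
  obtain ⟨u, huv⟩ : ∃ u : GridVertex d ℓ, u.1 = v.1 + Pi.single i (s : ℤ) :=
    ⟨⟨_, inGrid_add_single (by grind) (by grind)⟩, rfl⟩
  have hui : u.1 i = v.1 i + s := by simp [huv]
  have huS : u ∈ gridSlab ℓ i m := by
    simp only [gridSlab, Set.mem_ofPred_eq]
    grind
  obtain ⟨u', huu', hu'u, hu'⟩ := hinv.exists_swap huS fun x hxS _ y hxy =>
    hf.eq_slabReflection hinv hℓ hxS hxy
  have hsu : (s : ℤ) = 2 * m + 1 - 2 * u.1 i := by grind
  rw [slabReflection, ← hsu] at hu'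
  exact hf.eq_none_of_swap huu' hu'u huv hu'

end IsCandidateGridTranslation

section Counting

variable {d : ℕ} {ℓ : Fin d → ℕ} {f : GridVertex d ℓ → Option (GridVertex d ℓ)} {i : Fin d}
  {m c : ℤ} {v : GridVertex d ℓ}

lemma isInvariantOn_gridSlab_of_not_isEscapingSlab (hdom : gridSlab ℓ i m ⊆ {u | f u ≠ none})
    (hesc : ¬ IsEscapingSlab f i m) : IsInvariantOn f (gridSlab ℓ i m) := by
  intro v hv
  obtain ⟨w, hvw⟩ := Option.ne_none_iff_exists'.1 (hdom hv)
  exact ⟨w, by_contra fun hw => hesc ⟨hdom, v, hv, w, hvw, hw⟩, hvw⟩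

lemma gridSlice_subset_lostVertices (hf : IsCandidateGridTranslation d ℓ f)
    (hℓ : ∀ j ≠ i, 3 ≤ ℓ j) (h0 : 0 ≤ m) (h1 : m + 1 < ℓ i)
    (hdom : gridSlab ℓ i m ⊆ {u | f u ≠ none}) (hesc : ¬ IsEscapingSlab f i m)
    (hc : c = m - 1 ∨ c = m + 2) : gridSlice ℓ i c ⊆ lostVertices f := by
  rintro v rfl
  exact hf.eq_none_of_adjacent_gridSlab
    (isInvariantOn_gridSlab_of_not_isEscapingSlab hdom hesc) hℓ h0 h1 hc

lemma exists_gridSlab_subset_domain {n : ℕ} (hlost : (lostVertices f).ncard ≤ n) (i : Fin d) :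
    ∃ j ≤ n, gridSlab ℓ i (2 * (j : ℤ)) ⊆ {u | f u ≠ none} := by
  by_contra! hno
  have hcover : (Finset.range (n + 1) : Set ℕ) ⊆
      (fun u : GridVertex d ℓ => (u.1 i / 2).toNat) '' lostVertices f := by
    intro j hj
    obtain ⟨u, hu, hfu⟩ := Set.not_subset.1 (hno j (by simpa [Nat.lt_succ_iff] using hj))
    refine ⟨u, not_not.1 hfu, ?_⟩
    rcases hu with hu | hu <;> simp only [hu] <;> omega
  have hcard := (Set.ncard_le_ncard hcover).trans (Set.ncard_image_le (Set.toFinite _))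
  rw [Set.ncard_coe_finset, Finset.card_range] at hcard
  omega

lemma lostVertices_eq_gridSlice (h0 : 0 ≤ c) (h1 : c < ℓ i)
    (hsub : gridSlice ℓ i c ⊆ lostVertices f)
    (hlost : (lostVertices f).ncard ≤ ∏ k ∈ Finset.univ.erase i, ℓ k) :
    lostVertices f = gridSlice ℓ i c :=
  (Set.eq_of_subset_of_ncard_le hsub (hlost.trans_eq (ncard_gridSlice h0 h1).symm)).symm

lemma prod_erase_pos (hℓ : ∀ j ≠ i, 0 < ℓ j) : 0 < ∏ k ∈ Finset.univ.erase i, ℓ k :=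
  Finset.prod_pos fun k hk => hℓ k (Finset.ne_of_mem_erase hk)

lemma three_le_prod_erase (hd : 1 < d) (hℓ : ∀ j ≠ i, 3 ≤ ℓ j) :
    3 ≤ ∏ k ∈ Finset.univ.erase i, ℓ k := by
  have : Nontrivial (Fin d) := Fin.nontrivial_iff_two_le.2 hd
  obtain ⟨j, hji⟩ := exists_ne i
  have hpos := prod_erase_pos fun j hj => Nat.zero_lt_of_lt (hℓ j hj)
  exact (hℓ j hji).trans (Nat.le_of_dvd hpos (Finset.dvd_prod_of_mem ℓ (by simp [hji])))

lemma exists_lostVertices_eq_gridSlice (hf : IsCandidateGridTranslation d ℓ f)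
    (hℓ : ∀ j ≠ i, 3 ≤ ℓ j) (hi : 2 * ∏ k ∈ Finset.univ.erase i, ℓ k + 2 ≤ ℓ i)
    (hlost : (lostVertices f).ncard ≤ ∏ k ∈ Finset.univ.erase i, ℓ k)
    (hesc : ∀ m : ℤ, 0 ≤ m → m + 1 < ℓ i → ¬ IsEscapingSlab f i m) :
    ∃ c, lostVertices f = gridSlice ℓ i c := by
  have hpos := prod_erase_pos fun j hj => Nat.zero_lt_of_lt (hℓ j hj)
  obtain ⟨j, hj, hdom⟩ := exists_gridSlab_subset_domain hlost i
  obtain ⟨c, hc, h0, h1⟩ : ∃ c : ℤ, (c = 2 * j - 1 ∨ c = 2 * j + 2) ∧ 0 ≤ c ∧ c < ℓ i := by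
    rcases Nat.eq_zero_or_pos j with rfl | hjpos
    · exact ⟨2, by omega⟩
    · exact ⟨2 * j - 1, by omega⟩
  exact ⟨c, lostVertices_eq_gridSlice h0 h1 (gridSlice_subset_lostVertices hf hℓ (by omega)
    (by omega) hdom (hesc _ (by omega) (by omega)) hc) hlost⟩

lemma exists_isEscapingSlab_of_one_lt (hd : 1 < d) (hf : IsCandidateGridTranslation d ℓ f)
    (hℓ : ∀ j ≠ i, 3 ≤ ℓ j) (hi : 2 * ∏ k ∈ Finset.univ.erase i, ℓ k + 2 ≤ ℓ i)
    (hlost : (lostVertices f).ncard ≤ ∏ k ∈ Finset.univ.erase i, ℓ k) :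
    ∃ m : ℤ, 0 ≤ m ∧ m + 1 < ℓ i ∧ IsEscapingSlab f i m := by
  by_contra! hesc
  have hthree := three_le_prod_erase hd hℓ
  obtain ⟨c, hc⟩ := exists_lostVertices_eq_gridSlice hf hℓ hi hlost hesc
  obtain ⟨m, h0, h1, hcm⟩ :
      ∃ m : ℤ, 1 ≤ m ∧ m + 1 < ℓ i ∧ c ≠ m - 1 ∧ c ≠ m ∧ c ≠ m + 1 := by
    rcases le_or_gt c 3 with hc3 | hc3
    · exact ⟨5, by omega⟩
    · exact ⟨1, by omega⟩
  have hdom : gridSlab ℓ i m ⊆ {u | f u ≠ none} := by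
    intro u hu hfu
    have huc : u ∈ gridSlice ℓ i c := hc ▸ hfu
    simp only [gridSlab, gridSlice, Set.mem_ofPred_eq] at hu huc
    omega
  have hsub : gridSlice ℓ i (m - 1) ⊆ lostVertices f := gridSlice_subset_lostVertices hf hℓ
    (by omega) h1 hdom (hesc m (by omega) h1) (Or.inl rfl)
  obtain ⟨v, hv⟩ : (gridSlice ℓ i (m - 1)).Nonempty := by
    apply Set.nonempty_of_ncard_ne_zero
    rw [ncard_gridSlice (by omega) (by omega)]
    omega
  have hvc : v ∈ gridSlice ℓ i c := hc ▸ hsub hv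
  exact hcm.1 (hvc.symm.trans hv)

end Counting

section Path

lemma isEscapingSlab_of_eq_singleton {d : ℕ} {ℓ : Fin d → ℕ}
    {f : GridVertex d ℓ → Option (GridVertex d ℓ)} {i : Fin d} {m : ℤ} {v : GridVertex d ℓ}
    (hf : IsCandidateGridTranslation d ℓ f) (hslab : gridSlab ℓ i m = {v}) (hv : f v ≠ none) :
    IsEscapingSlab f i m := by
  obtain ⟨w, hvw⟩ := Option.ne_none_iff_exists'.1 hv
  have hadj := hf.adj_map v w hvw
  refine ⟨by simpa [hslab] using hv, v, by simp [hslab], w, hvw, ?_⟩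
  rw [hslab, Set.mem_singleton_iff]
  rintro rfl
  simp [TaxiAdj] at hadj

variable {ℓ : Fin 1 → ℕ} {f : GridVertex 1 ℓ → Option (GridVertex 1 ℓ)}

lemma gridSlab_eq_singleton {m : ℤ} {v : GridVertex 1 ℓ} (hv : v ∈ gridSlab ℓ 0 m)
    (hm : m = -1 ∨ m + 1 = ℓ 0) : gridSlab ℓ 0 m = {v} := by
  refine Set.eq_singleton_iff_unique_mem.2 ⟨hv, fun u hu => Subtype.ext (funext fun k => ?_)⟩
  obtain rfl := Subsingleton.elim k 0
  have hu0 := u.2 0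
  have hv0 := v.2 0
  simp only [gridSlab, Set.mem_ofPred_eq] at hu hv
  omega

/-- The slab found here consists of an end vertex and of an empty slice outside the grid. In
dimension `1` there need not be another one: for `ℓ 0 = 3`, the map swapping `0` and `1` and losing
`2` is maximal. -/
lemma exists_isEscapingSlab_of_fin_one (hf : IsCandidateGridTranslation 1 ℓ f) (hℓ : 2 ≤ ℓ 0)
    (hlost : (lostVertices f).ncard ≤ 1) : ∃ m, IsEscapingSlab f 0 m := by
  let first : GridVertex 1 ℓ := ⟨fun _ => 0, Unique.forall_iff.2 (by simp; omega)⟩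
  let last : GridVertex 1 ℓ := ⟨fun _ => ℓ 0 - 1, Unique.forall_iff.2 (by simp; omega)⟩
  by_cases hfirst : f first = none
  · have hlast : f last ≠ none := by
      intro hlast
      have heq : first = last := (Set.ncard_le_one (Set.toFinite _)).1 hlost _ hfirst _ hlast
      have hcoord : (0 : ℤ) = ℓ 0 - 1 := congrFun (congrArg Subtype.val heq) 0
      omega
    exact ⟨ℓ 0 - 1, isEscapingSlab_of_eq_singleton hf
      (gridSlab_eq_singleton (Or.inl rfl) (Or.inr (by omega))) hlast⟩
  · exact ⟨-1, isEscapingSlab_of_eq_singleton hf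
      (gridSlab_eq_singleton (Or.inr rfl) (Or.inl rfl)) hfirst⟩

end Path

section Lengths

variable {d : ℕ} {ℓ : Fin d → ℕ}

lemma three_le_length
    (hℓ : ∀ i : Fin d, (i : ℕ) + 1 < d →
      2 * (∏ k ∈ Finset.univ.filter (fun k : Fin d => i < k), ℓ k) + 2 ≤ ℓ i)
    (hlast : ∀ i : Fin d, (i : ℕ) + 1 = d → 3 ≤ ℓ i) (i : Fin d) : 3 ≤ ℓ i := by
  have hpos (k : Fin d) : 0 < ℓ k := by
    rcases (Nat.succ_le_of_lt k.2).lt_or_eq with hk | hk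
    · exact Nat.zero_lt_of_lt (hℓ k hk)
    · exact Nat.zero_lt_of_lt (hlast k hk)
  rcases (Nat.succ_le_of_lt i.2).lt_or_eq with hi | hi
  · have hprod : 0 < ∏ k ∈ Finset.univ.filter (fun k : Fin d => i < k), ℓ k :=
      Finset.prod_pos fun k _ => hpos k
    have := hℓ i hi
    omega
  · exact hlast i hi

lemma filter_zero_lt_eq_erase (hd : 0 < d) :
    Finset.univ.filter (fun k : Fin d => ⟨0, hd⟩ < k) = Finset.univ.erase ⟨0, hd⟩ := by
  ext k
  simp only [Finset.mem_filter, Finset.mem_univ, true_and, Finset.mem_erase, and_true, Fin.lt_def,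
    ne_eq, Fin.ext_iff]
  omega

end Lengths

theorem exists_adjacent_slices_in_domain_general {d : ℕ} {ℓ : Fin d → ℕ}
    {f : GridVertex d ℓ → Option (GridVertex d ℓ)} (hf : IsCandidateGridTranslation d ℓ f)
    (i : Fin d) (hℓ : ∀ j, 3 ≤ ℓ j)
    (hi : 1 < d → 2 * ∏ k ∈ Finset.univ.erase i, ℓ k + 2 ≤ ℓ i)
    (hlost : (lostVertices f).ncard ≤ ∏ k ∈ Finset.univ.erase i, ℓ k) :
    ∃ m : ℤ, (1 < d → 0 ≤ m ∧ m + 1 < ℓ i) ∧ IsEscapingSlab f i m := by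
  rcases (Nat.one_le_of_lt i.pos).eq_or_lt with rfl | hd
  · obtain rfl := Subsingleton.elim i 0
    obtain ⟨m, hm⟩ := exists_isEscapingSlab_of_fin_one hf (by linarith [hℓ 0])
      (by simpa using hlost)
    exact ⟨m, by simp, hm⟩
  · obtain ⟨m, h0, h1, hm⟩ :=
      exists_isEscapingSlab_of_one_lt hd hf (fun j _ => hℓ j) (hi hd) hlost
    exact ⟨m, fun _ => ⟨h0, h1⟩, hm⟩

theorem exists_adjacent_slices_in_domain
    (d : ℕ) (hd : 0 < d) (ℓ : Fin d → ℕ)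
    (hℓ : ∀ i : Fin d, (i : ℕ) + 1 < d →
      2 * (∏ k ∈ Finset.univ.filter (fun k : Fin d => i < k), ℓ k) + 2 ≤ ℓ i)
    (hlast : 3 ≤ ℓ ⟨d - 1, by omega⟩)
    (f : {v : Fin d → ℤ // InGrid d ℓ v} → Option {v : Fin d → ℤ // InGrid d ℓ v})
    (hf : IsCandidateGridTranslation d ℓ f)
    (hmax : ∀ g, IsCandidateGridTranslation d ℓ g →
      Set.ncard {v | g v ≠ none} ≤ Set.ncard {v | f v ≠ none})
    :
    ∃ m : ℤ,
      ({u : {v : Fin d → ℤ // InGrid d ℓ v} | u.1 ⟨0, hd⟩ = m ∨ u.1 ⟨0, hd⟩ = m + 1} ⊆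
        {u | f u ≠ none}) ∧
      ∃ u, (u.1 ⟨0, hd⟩ = m ∨ u.1 ⟨0, hd⟩ = m + 1) ∧
        ∃ w, f u = some w ∧ ¬ (w.1 ⟨0, hd⟩ = m ∨ w.1 ⟨0, hd⟩ = m + 1) := by
  have hlen : ∀ i, 3 ≤ ℓ i := three_le_length hℓ fun i hi => by
    rwa [show i = ⟨d - 1, by omega⟩ from Fin.ext (by simp; omega)]
  have hfirst : 1 < d → 2 * ∏ k ∈ Finset.univ.erase ⟨0, hd⟩, ℓ k + 2 ≤ ℓ ⟨0, hd⟩ := fun h =>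
    filter_zero_lt_eq_erase hd ▸ hℓ ⟨0, hd⟩ (by simpa using h)
  have hpos : 0 < ℓ ⟨0, hd⟩ := Nat.zero_lt_of_lt (hlen _)
  obtain ⟨m, -, hm⟩ := exists_adjacent_slices_in_domain_general hf ⟨0, hd⟩ hlen hfirst
    (ncard_lostVertices_le_of_maximal hpos hmax)
  exact ⟨m, hm⟩
end
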